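/- arXiv:1606.00563 — 2 statements merged into one kernel-verified Lean document; each statement's English description precedes it below -/
import Mathlib

section
/- For the singular part of the rook partition monoid, rank(RP_n ∖ S_n) = idrank(RP_n ∖ S_n) = (n² + 3n)/2; that is, every generating set of the semigroup RP_n ∖ S_n has at least (n² + 3n)/2 elements, and there is a generating set of exactly this size consisting entirely of idempotents. -/
/-!
The rank equals the number of the idempotents `ō_i`, `ē_i`, `t̄_ij` (`i < j`).

*Generation.* Let `iso x α` be obtained from `α` by making the point `x` a singleton block; it
is singular. On the left, `ē_i α = iso i α`, and conversely `α = ō_i (iso i α)` if `i` is a rook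
dot (`obar_mul_iso`) and `α = t̄_ij (iso i α)` if `i` and `j ≠ i` share a block (`tbar_mul_iso`).
The lower row is handled by the flip anti-automorphism, which fixes all generators. Isolating
points in this way reduces a singular `α` to a partial permutation `pp σ A`, with `A` nonempty,
whose other points are singleton blocks. Multiplying by idempotents `ē_i` reduces this to a
single hole `A = {k}`. The elements for `σ` and `(b k) σ` both arise by isolating one of two points
of a common block, so they are generated together (`inT_pp_swap`). Since the transpositions
`(b k)` generate `S_n`, everything descends to `σ = 1`, where `pp 1 {k} = ē_k`. Every
factorization used multiplies by one generator at a time, so associativity is never needed.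

*Lower bound.* If `α` is a product of elements of `G`, the first factor `g` satisfies
the upper-row relations `LeftOf g α`. When `α` is one of the listed idempotents and `g` is
not a permutation, these force `g` to have the same upper-row shape `Pat` as `α`. The shapes are
pairwise incompatible, so `G` has a separate element for each index.
-/

namespace RookPaper

/-- Reflexive–symmetric–transitive closure of a relation
(connectivity by paths in a graph). -/
inductive RClosure {V : Type*} (E : V → V → Prop) : V → V → Prop
  | base {x y : V} : E x y → RClosure E x y
  | refl (x : V) : RClosure E x x
  | symm {x y : V} : RClosure E x y → RClosure E y x
  | trans {x y z : V} : RClosure E x y → RClosure E y z → RClosure E x z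

/-- The 2n points `1,…,n` (`Sum.inl`) and `1',…,n'` (`Sum.inr`). -/
abbrev Pt (n : ℕ) := Fin n ⊕ Fin n

/-- A rook partition of degree `n`, encoded as a partial equivalence relation on the
`2n` points: its blocks are the equivalence classes of `rel`, and the rook dots are the
points `x` with `¬ rel x x`. -/
structure RP (n : ℕ) where
  rel : Pt n → Pt n → Prop
  symm : ∀ {x y : Pt n}, rel x y → rel y x
  trans : ∀ {x y z : Pt n}, rel x y → rel y z → rel x z

/-- The underlying index in `[n]` of a point (`i` and `i'` both have index `i`). -/
def idx {n : ℕ} : Pt n → Fin n := Sum.elim id id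

/-- For `A ⊆ [n]`, the corresponding set of upper points. -/
def upSet {n : ℕ} (A : Set (Fin n)) : Set (Pt n) := Sum.inl '' A

/-- For `B ⊆ [n]`, the set `B' = {b' : b ∈ B}` of lower points. -/
def dnSet {n : ℕ} (B : Set (Fin n)) : Set (Pt n) := Sum.inr '' B

/-- `x` is a rook dot of `α`. -/
def RP.IsRookDot {n : ℕ} (α : RP n) (x : Pt n) : Prop := ¬ α.rel x x

/-- `α` has no rook dots, i.e. `α` lies in the partition monoid `P_n`. -/
def RP.NoDots {n : ℕ} (α : RP n) : Prop := ∀ x, α.rel x x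

/-- `B` is a block of `α`. -/
def RP.IsBlock {n : ℕ} (α : RP n) (B : Set (Pt n)) : Prop :=
  ∃ x, α.rel x x ∧ B = {y | α.rel x y}

/-- The identity rook partition, with blocks `{i,i'}`. -/
instance {n : ℕ} : One (RP n) :=
  ⟨{ rel := fun x y => idx x = idx y
     symm := fun h => Eq.symm h
     trans := fun h h' => Eq.trans h h' }⟩

/-! The product graph `Γ(α,β)` lives on three rows of `n` vertices. -/

abbrev V3 (n : ℕ) := Fin n ⊕ Pt n

def vTop {n : ℕ} (i : Fin n) : V3 n := Sum.inl i
def vMid {n : ℕ} (i : Fin n) : V3 n := Sum.inr (Sum.inl i)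
def vBot {n : ℕ} (i : Fin n) : V3 n := Sum.inr (Sum.inr i)

/-- `α` occupies the top and middle rows. -/
def embA {n : ℕ} : Pt n → V3 n := Sum.elim vTop vMid
/-- `β` occupies the middle and bottom rows. -/
def embB {n : ℕ} : Pt n → V3 n := Sum.elim vMid vBot
/-- The product `αβ` lives on the top and bottom rows. -/
def embOut {n : ℕ} : Pt n → V3 n := Sum.elim vTop vBot

/-- The edges of the product graph `Γ(α,β)`. -/
def pgEdge {n : ℕ} (α β : RP n) (x y : V3 n) : Prop :=
  (∃ a b : Pt n, α.rel a b ∧ x = embA a ∧ y = embA b) ∨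
  (∃ a b : Pt n, β.rel a b ∧ x = embB a ∧ y = embB b)

/-- Connectivity (by a possibly empty path) in the product graph `Γ(α,β)`. -/
def pgConn {n : ℕ} (α β : RP n) : V3 n → V3 n → Prop :=
  RClosure (pgEdge α β)

/-- The white vertices of `Γ(α,β)`: a top vertex is white if it is a rook dot of `α`,
a bottom vertex is white if it is a rook dot of `β`, and a middle vertex is white if it is
a rook dot of `α` (as a lower point) or of `β` (as an upper point). -/
def pgWhite {n : ℕ} (α β : RP n) (v : V3 n) : Prop :=
  (∃ i, v = vTop i ∧ ¬ α.rel (Sum.inl i) (Sum.inl i)) ∨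
  (∃ i, v = vMid i ∧ (¬ α.rel (Sum.inr i) (Sum.inr i) ∨ ¬ β.rel (Sum.inl i) (Sum.inl i))) ∨
  (∃ i, v = vBot i ∧ ¬ β.rel (Sum.inr i) (Sum.inr i))

/-- The product of two rook partitions: a point of `αβ` is a rook dot iff it is connected
to a white vertex of `Γ(α,β)`, and two points are in the same block of `αβ` iff they are
connected in `Γ(α,β)` (and are not rook dots). -/
instance {n : ℕ} : Mul (RP n) :=
  ⟨fun α β =>
    { rel := fun x y =>
        pgConn α β (embOut x) (embOut y) ∧
          ∀ w, pgWhite α β w → ¬ pgConn α β (embOut x) w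
      symm := by
        intro x y h
        exact ⟨RClosure.symm h.1, fun w hw hc => h.2 w hw (RClosure.trans h.1 hc)⟩
      trans := by
        intro x y z h h'
        exact ⟨RClosure.trans h.1 h'.1, h.2⟩ }⟩

/-- The rook partition corresponding to a permutation `σ`: blocks `{i, (σ i)'}`. -/
def permRP {n : ℕ} (σ : Equiv.Perm (Fin n)) : RP n where
  rel x y := Sum.elim (fun i => σ i) (fun i => i) x = Sum.elim (fun i => σ i) (fun i => i) y
  symm := fun h => Eq.symm h
  trans := fun h h' => Eq.trans h h'

/-- `α` lies in the copy of the symmetric group `S_n` inside `RP_n`. -/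
def RP.IsPermDiag {n : ℕ} (α : RP n) : Prop := ∃ σ : Equiv.Perm (Fin n), α = permRP σ

/-- The generator `ē_i` : blocks `{j,j'}` for `j ≠ i`, and singleton blocks `{i}`, `{i'}`. -/
def ebar {n : ℕ} (i : Fin n) : RP n where
  rel x y := x = y ∨ (idx x = idx y ∧ idx x ≠ i)
  symm := by
    rintro x y (rfl | ⟨h1, h2⟩)
    · exact Or.inl rfl
    · exact Or.inr ⟨h1.symm, h1 ▸ h2⟩
  trans := by
    rintro x y z (rfl | ⟨h1, h2⟩) h
    · exact h
    · rcases h with rfl | ⟨h3, h4⟩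
      · exact Or.inr ⟨h1, h2⟩
      · exact Or.inr ⟨h1.trans h3, h2⟩

/-- The generator `t̄_ij` (for `i ≠ j`): blocks `{k,k'}` for `k ∉ {i,j}`, and `{i,j,i',j'}`. -/
def tbar {n : ℕ} (i j : Fin n) : RP n where
  rel x y := idx x = idx y ∨ ((idx x = i ∨ idx x = j) ∧ (idx y = i ∨ idx y = j))
  symm := by
    rintro x y (h | ⟨h1, h2⟩)
    · exact Or.inl h.symm
    · exact Or.inr ⟨h2, h1⟩
  trans := by
    rintro x y z hxy hyz
    rcases hxy with h | ⟨h1, h2⟩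
    · rcases hyz with h' | ⟨h3, h4⟩
      · exact Or.inl (h.trans h')
      · refine Or.inr ⟨?_, h4⟩
        rw [h]; exact h3
    · rcases hyz with h' | ⟨h3, h4⟩
      · refine Or.inr ⟨h1, ?_⟩
        rw [← h']; exact h2
      · exact Or.inr ⟨h1, h4⟩

/-- `ō_A` for a subset `A ⊆ [n]`: rook dots at all points of `A ∪ A'`, blocks `{j,j'}` for
`j ∉ A`. -/
def obarS {n : ℕ} (A : Set (Fin n)) : RP n where
  rel x y := idx x = idx y ∧ idx x ∉ A
  symm := by
    rintro x y ⟨h1, h2⟩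
    exact ⟨h1.symm, h1 ▸ h2⟩
  trans := by
    rintro x y z ⟨h1, h2⟩ ⟨h3, h4⟩
    exact ⟨h1.trans h3, h2⟩

/-- The generator `ō_i`: rook dots `i` and `i'`, blocks `{j,j'}` for `j ≠ i`. -/
def obar {n : ℕ} (i : Fin n) : RP n := obarS {i}

/-- For an index `i` of a simple transposition (`1 ≤ i ≤ n-1`, zero-based `Fin (n-1)`),
the smaller of the two swapped points. -/
def lo {n : ℕ} (i : Fin (n - 1)) : Fin n := ⟨i.val, by have := i.isLt; omega⟩
/-- The larger of the two swapped points. -/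
def hi {n : ℕ} (i : Fin (n - 1)) : Fin n := ⟨i.val + 1, by have := i.isLt; omega⟩

/-- The generator `s̄_i`: the simple transposition with blocks `{i,(i+1)'}`, `{i+1,i'}`,
and `{j,j'}` for other `j`. -/
def sbar {n : ℕ} (i : Fin (n - 1)) : RP n := permRP (Equiv.swap (lo i) (hi i))

/-- The generator `q̄_i = t̄_{i,i+1}`. -/
def qbar {n : ℕ} (i : Fin (n - 1)) : RP n := tbar (lo i) (hi i)

/-- Membership in the subsemigroup generated by a subset `X`. -/
inductive SgGen {M : Type*} [Mul M] (X : Set M) : M → Prop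
  | incl {x : M} : x ∈ X → SgGen X x
  | mul {a b : M} : SgGen X a → SgGen X b → SgGen X (a * b)

/-- Membership in the submonoid generated by a subset `X`. -/
inductive MonGen {M : Type*} [Mul M] [One M] (X : Set M) : M → Prop
  | one : MonGen X 1
  | incl {x : M} : x ∈ X → MonGen X x
  | mul {a b : M} : MonGen X a → MonGen X b → MonGen X (a * b)

/-- Evaluation of a word under a map on the letters (the product, in order, of the images
of the letters; the empty word evaluates to `1`). -/
def evalWord {X M : Type*} [Mul M] [One M] (f : X → M) : List X → M
  | [] => 1
  | [x] => f x
  | x :: y :: w => f x * evalWord f (y :: w)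

/-- The congruence on the free monoid of words (with product = concatenation) generated
by a set of pairs `R`.  Restricted to nonempty words it is the congruence on the free
semigroup generated by `R`. -/
inductive CongGen {X : Type*} (R : List X → List X → Prop) : List X → List X → Prop
  | rel {u v : List X} : R u v → CongGen R u v
  | refl (u : List X) : CongGen R u u
  | symm {u v : List X} : CongGen R u v → CongGen R v u
  | trans {u v w : List X} : CongGen R u v → CongGen R v w → CongGen R u w
  | mul {u v u' v' : List X} : CongGen R u v → CongGen R u' v' → CongGen R (u ++ u') (v ++ v')


/-! ### Products and labellings of the product graph -/

theorem RP.ext_rel {n : ℕ} {α β : RP n} (h : ∀ x y, α.rel x y ↔ β.rel x y) : α = β := by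
  cases α; cases β
  congr
  funext x y
  exact propext (h x y)

instance {n : ℕ} : Finite (RP n) :=
  Finite.of_injective (fun α : RP n => α.rel)
    (fun α β h => RP.ext_rel fun x y => by rw [show α.rel = β.rel from h])

theorem mul_rel {n : ℕ} (α β : RP n) (x y : Pt n) :
    (α * β).rel x y ↔ pgConn α β (embOut x) (embOut y) ∧
      ∀ w, pgWhite α β w → ¬ pgConn α β (embOut x) w := Iff.rfl

theorem connA {n : ℕ} {α β : RP n} {a b : Pt n} (h : α.rel a b) :
    pgConn α β (embA a) (embA b) := .base (.inl ⟨a, b, h, rfl, rfl⟩)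

theorem connB {n : ℕ} {α β : RP n} {a b : Pt n} (h : β.rel a b) :
    pgConn α β (embB a) (embB b) := .base (.inr ⟨a, b, h, rfl, rfl⟩)

theorem pgEdge_symm {n : ℕ} {α β : RP n} {v w : V3 n} (h : pgEdge α β v w) : pgEdge α β w v := by
  rcases h with ⟨a, b, h, rfl, rfl⟩ | ⟨a, b, h, rfl, rfl⟩
  · exact .inl ⟨b, a, α.symm h, rfl, rfl⟩
  · exact .inr ⟨b, a, β.symm h, rfl, rfl⟩

/-- Criterion for computing a product. A partial equivalence relation `E` on the product graph
that edges respect and that avoids the white vertices, and that on the outer rows is no coarser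
than connectivity and has no undefined vertex other than those connected to a white one, restricts
on the outer rows to the product. -/
theorem mul_rel_of {n : ℕ} {α β : RP n} (E : V3 n → V3 n → Prop)
    (hs : ∀ {v w}, E v w → E w v) (ht : ∀ {u v w}, E u v → E v w → E u w)
    (hedge : ∀ {v w}, pgEdge α β v w → E v v → E v w)
    (hwhite : ∀ {w}, pgWhite α β w → ¬ E w w)
    (hconn : ∀ x y : Pt n, E (embOut x) (embOut y) → pgConn α β (embOut x) (embOut y))
    (hdot : ∀ x : Pt n, ¬ E (embOut x) (embOut x) → ∃ w, pgWhite α β w ∧ pgConn α β (embOut x) w)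
    (x y : Pt n) : (α * β).rel x y ↔ E (embOut x) (embOut y) := by
  have key : ∀ {v w}, pgConn α β v w → (E v v → E v w) ∧ (E w w → E w v) := by
    intro v w h
    induction h with
    | base h => exact ⟨hedge h, hedge (pgEdge_symm h)⟩
    | refl => exact ⟨id, id⟩
    | symm _ ih => exact ⟨ih.2, ih.1⟩
    | trans _ _ ih1 ih2 =>
      refine ⟨fun h => ?_, fun h => ?_⟩
      · have h1 := ih1.1 h
        exact ht h1 (ih2.1 (ht (hs h1) h1))
      · have h1 := ih2.2 h
        exact ht h1 (ih1.2 (ht (hs h1) h1))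
  rw [mul_rel]
  constructor
  · rintro ⟨h1, h2⟩
    by_cases hx : E (embOut x) (embOut x)
    · exact (key h1).1 hx
    · obtain ⟨w, hw, hc⟩ := hdot x hx
      exact absurd hc (h2 w hw)
  · intro h
    refine ⟨hconn x y h, fun w hw hc => hwhite hw ?_⟩
    have := (key hc).1 (ht h (hs h))
    exact ht (hs this) this

/-- The fold of the product graph onto the points of the right factor that sends the top and
the middle row to the upper points. -/
def fold {n : ℕ} : V3 n → Pt n := Sum.elim Sum.inl (Sum.elim Sum.inl Sum.inr)

@[simp] theorem fold_out {n : ℕ} (x : Pt n) : fold (embOut x) = x := by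
  cases x <;> rfl

/-- `iso x α` cuts the point `x` out of its block (or removes its rook dot) and makes `{x}`
a block. -/
def iso {n : ℕ} (p : Pt n) (α : RP n) : RP n where
  rel x y := (x = p ∧ y = p) ∨ (x ≠ p ∧ y ≠ p ∧ α.rel x y)
  symm := by
    rintro x y (h | ⟨h1, h2, h3⟩)
    · exact .inl h.symm
    · exact .inr ⟨h2, h1, α.symm h3⟩
  trans := by
    rintro x y z (⟨h1, h2⟩ | ⟨h1, h2, h3⟩) (⟨h4, h5⟩ | ⟨h4, h5, h6⟩)
    · exact .inl ⟨h1, h5⟩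
    · exact absurd h2 h4
    · exact absurd h4 h2
    · exact .inr ⟨h1, h5, α.trans h3 h6⟩

theorem ebar_mul {n : ℕ} (i : Fin n) (β : RP n) : ebar i * β = iso (Sum.inl i) β := by
  apply RP.ext_rel
  intro x y
  have hdiag : ∀ j, j ≠ i → pgConn (ebar i) β (vTop j) (vMid j) := fun j hj =>
    connA (a := Sum.inl j) (b := Sum.inr j) (.inr ⟨rfl, hj⟩)
  have hc : ∀ x : Pt n, x ≠ Sum.inl i → pgConn (ebar i) β (embOut x) (embB x) := by
    rintro (j | j) h
    · exact hdiag j (by simpa using h)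
    · exact .refl _
  rw [mul_rel_of (fun v w => (v = vTop i ∧ w = vTop i) ∨
    (v ≠ vTop i ∧ w ≠ vTop i ∧ β.rel (fold v) (fold w)))]
  · rcases x with x | x <;> rcases y with y | y <;> simp [iso, embOut, vTop, vBot, fold]
  · rintro v w (h | ⟨h1, h2, h3⟩)
    · exact .inl h.symm
    · exact .inr ⟨h2, h1, β.symm h3⟩
  · rintro x y z (⟨h1, h2⟩ | ⟨h1, h2, h3⟩) (⟨h4, h5⟩ | ⟨h4, h5, h6⟩)
    · exact .inl ⟨h1, h5⟩
    · exact absurd h2 h4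
    · exact absurd h4 h2
    · exact .inr ⟨h1, h5, β.trans h3 h6⟩
  · rintro v w (⟨a, b, h, rfl, rfl⟩ | ⟨a, b, h, rfl, rfl⟩) hv
    · rcases a with a | a <;> rcases b with b | b <;>
        simp_all [embA, vTop, vMid, fold, ebar, idx] <;> grind
    · rcases a with a | a <;> rcases b with b | b <;>
        simp_all [embB, vTop, vMid, vBot, fold]
  · rintro w (⟨j, rfl, h⟩ | ⟨j, rfl, h⟩ | ⟨j, rfl, h⟩)
    · exact absurd (.inl rfl) h
    · simpa [vTop, vMid, fold, ebar] using h
    · simpa [vTop, vBot, fold, ebar] using h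
  · rintro x y (⟨h1, h2⟩ | ⟨h1, h2, h3⟩)
    · rw [h1, h2]; exact .refl _
    · simp only [fold_out] at h3
      exact .trans (hc x (by rintro rfl; exact h1 rfl))
        (.trans (connB h3) (.symm (hc y (by rintro rfl; exact h2 rfl))))
  · rintro (j | j) h
    · by_cases hj : j = i
      · subst hj; exact absurd (.inl ⟨rfl, rfl⟩) h
      · refine ⟨vMid j, .inr (.inl ⟨j, rfl, .inr fun h' => h (.inr ⟨?_, ?_, h'⟩)⟩), hdiag j hj⟩ <;>
          simpa [embOut, vTop] using hj
    · refine ⟨vBot j, .inr (.inr ⟨j, rfl, fun h' => h (.inr ⟨?_, ?_, h'⟩)⟩), .refl _⟩ <;>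
        simp [embOut, vTop, vBot]

theorem obar_mul {n : ℕ} (i : Fin n) (β : RP n) (x y : Pt n) :
    (obar i * β).rel x y ↔ β.rel x y ∧ ¬ β.rel x (Sum.inl i) ∧ x ≠ Sum.inl i ∧ y ≠ Sum.inl i := by
  have hdiag : ∀ j, j ≠ i → pgConn (obar i) β (vTop j) (vMid j) := fun j hj =>
    connA (a := Sum.inl j) (b := Sum.inr j) ⟨rfl, hj⟩
  have hc : ∀ x : Pt n, x ≠ Sum.inl i → pgConn (obar i) β (embOut x) (embB x) := by
    rintro (j | j) h
    · exact hdiag j (by simpa using h)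
    · exact .refl _
  have hw : pgWhite (obar i) β (vMid i) :=
    .inr (.inl ⟨i, rfl, .inl fun h => h.2 rfl⟩)
  rw [mul_rel_of (fun v w => β.rel (fold v) (fold w) ∧ ¬ β.rel (fold v) (Sum.inl i) ∧
    fold v ≠ Sum.inl i ∧ fold w ≠ Sum.inl i)]
  · simp
  · rintro v w ⟨h1, h2, h3, h4⟩
    exact ⟨β.symm h1, fun h => h2 (β.trans h1 h), h4, h3⟩
  · rintro x y z ⟨h1, h2, h3, h4⟩ ⟨h5, h6, h7, h8⟩
    exact ⟨β.trans h1 h5, h2, h3, h8⟩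
  · rintro v w (⟨a, b, h, rfl, rfl⟩ | ⟨a, b, h, rfl, rfl⟩) hv
    · rcases a with a | a <;> rcases b with b | b <;>
        simp_all [embA, vTop, vMid, fold, obar, obarS, idx]
    · have : ∀ c : Pt n, fold (embB c) = c := by rintro (c | c) <;> rfl
      simp only [this] at hv ⊢
      exact ⟨h, hv.2.1, hv.2.2.1, fun hb => hv.2.1 (hb ▸ h)⟩
  · rintro w (⟨j, rfl, h⟩ | ⟨j, rfl, h⟩ | ⟨j, rfl, h⟩) hv
    · have : j = i := by simpa [obar, obarS, idx] using h
      exact hv.2.2.1 (by rw [this]; rfl)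
    · rcases h with h | h
      · have : j = i := by simpa [obar, obarS, idx] using h
        exact hv.2.2.1 (by rw [this]; rfl)
      · exact h hv.1
    · exact h hv.1
  · rintro x y ⟨h1, h2, h3, h4⟩
    simp only [fold_out] at h1 h2 h3 h4
    exact .trans (hc x h3) (.trans (connB h1) (.symm (hc y h4)))
  · intro x h
    simp only [fold_out] at h
    by_cases hx : x = Sum.inl i
    · subst hx
      exact ⟨vTop i, .inl ⟨i, rfl, fun h => h.2 rfl⟩, .refl _⟩
    · by_cases hx2 : β.rel x (Sum.inl i)
      · exact ⟨vMid i, hw, .trans (hc x hx) (connB hx2)⟩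
      · have hx3 : ¬ β.rel x x := fun h' => h ⟨h', hx2, hx, hx⟩
        refine ⟨embB x, ?_, hc x hx⟩
        rcases x with j | j
        · exact .inr (.inl ⟨j, rfl, .inr hx3⟩)
        · exact .inr (.inr ⟨j, rfl, hx3⟩)

/-- Multiplying by `t̄_ij` on the left merges the blocks of `i` and `j`, if neither of the two
is a rook dot. -/
theorem tbar_mul {n : ℕ} (i j : Fin n) (β : RP n) (hi : β.rel (Sum.inl i) (Sum.inl i))
    (hj : β.rel (Sum.inl j) (Sum.inl j)) (x y : Pt n) :
    (tbar i j * β).rel x y ↔ β.rel x y ∨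
      ((β.rel x (Sum.inl i) ∨ β.rel x (Sum.inl j)) ∧
        (β.rel y (Sum.inl i) ∨ β.rel y (Sum.inl j))) := by
  have hc : ∀ x : Pt n, pgConn (tbar i j) β (embOut x) (embB x) := by
    rintro (k | k)
    · exact connA (a := Sum.inl k) (b := Sum.inr k) (.inl rfl)
    · exact .refl _
  have hij : pgConn (tbar i j) β (vMid i) (vMid j) :=
    connA (a := Sum.inr i) (b := Sum.inr j) (.inr ⟨.inl rfl, .inr rfl⟩)
  have hS : ∀ x : Pt n, β.rel x (Sum.inl i) ∨ β.rel x (Sum.inl j) →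
      pgConn (tbar i j) β (embB x) (vMid i) := by
    rintro x (h | h)
    · exact connB h
    · exact .trans (connB h) (.symm hij)
  have hxx : ∀ x : Pt n, (β.rel x x ∨ ((β.rel x (Sum.inl i) ∨ β.rel x (Sum.inl j)) ∧
        (β.rel x (Sum.inl i) ∨ β.rel x (Sum.inl j)))) → β.rel x x := by
    rintro x (h | ⟨h | h, -⟩)
    · exact h
    · exact β.trans h (β.symm h)
    · exact β.trans h (β.symm h)
  rw [mul_rel_of (fun v w => β.rel (fold v) (fold w) ∨
      ((β.rel (fold v) (Sum.inl i) ∨ β.rel (fold v) (Sum.inl j)) ∧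
        (β.rel (fold w) (Sum.inl i) ∨ β.rel (fold w) (Sum.inl j))))]
  · simp
  · rintro v w (h | ⟨h1, h2⟩)
    · exact .inl (β.symm h)
    · exact .inr ⟨h2, h1⟩
  · rintro x y z (h1 | ⟨h1, h2⟩) (h3 | ⟨h3, h4⟩)
    · exact .inl (β.trans h1 h3)
    · exact .inr ⟨h3.imp (β.trans h1) (β.trans h1), h4⟩
    · exact .inr ⟨h1, h2.imp (β.trans (β.symm h3)) (β.trans (β.symm h3))⟩
    · exact .inr ⟨h1, h4⟩
  · rintro v w (⟨a, b, h, rfl, rfl⟩ | ⟨a, b, h, rfl, rfl⟩) hv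
    · have hf : ∀ c : Pt n, fold (embA c) = Sum.inl (idx c) := by rintro (c | c) <;> rfl
      have hv := hxx _ hv
      simp only [hf] at hv ⊢
      rcases h with h | ⟨h1, h2⟩
      · exact .inl (h ▸ hv)
      · right
        constructor
        · rcases h1 with h1 | h1 <;> rw [h1] <;> simp [hi, hj]
        · rcases h2 with h1 | h1 <;> rw [h1] <;> simp [hi, hj]
    · have : ∀ c : Pt n, fold (embB c) = c := by rintro (c | c) <;> rfl
      simp only [this]
      exact .inl h
  · rintro w (⟨k, rfl, h⟩ | ⟨k, rfl, h⟩ | ⟨k, rfl, h⟩) hv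
    · exact h (.inl rfl)
    · rcases h with h | h
      · exact h (.inl rfl)
      · exact h (hxx _ hv)
    · exact h (hxx _ hv)
  · rintro x y h
    simp only [fold_out] at h
    refine .trans (hc x) (.trans ?_ (.symm (hc y)))
    rcases h with h | ⟨h1, h2⟩
    · exact connB h
    · exact .trans (hS x h1) (.symm (hS y h2))
  · intro x h
    simp only [fold_out] at h
    have hx3 : ¬ β.rel x x := fun h' => h (.inl h')
    refine ⟨embB x, ?_, hc x⟩
    rcases x with j | j
    · exact .inr (.inl ⟨j, rfl, .inr hx3⟩)
    · exact .inr (.inr ⟨j, rfl, hx3⟩)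

theorem obar_mul_iso {n : ℕ} {i : Fin n} {α : RP n} (h : ¬ α.rel (Sum.inl i) (Sum.inl i)) :
    obar i * iso (Sum.inl i) α = α := by
  apply RP.ext_rel
  intro x y
  rw [obar_mul]
  have h1 : ∀ z, ¬ α.rel (Sum.inl i) z := fun z hz => h (α.trans hz (α.symm hz))
  have h2 : ∀ z, ¬ α.rel z (Sum.inl i) := fun z hz => h1 z (α.symm hz)
  by_cases hx : x = Sum.inl i
  · subst hx; simp [h1]
  · by_cases hy : y = Sum.inl i
    · subst hy; simp [h2]
    · simp [iso, hx, hy]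

theorem tbar_mul_iso {n : ℕ} {i j : Fin n} {α : RP n} (hij : i ≠ j)
    (h : α.rel (Sum.inl i) (Sum.inl j)) :
    tbar i j * iso (Sum.inl i) α = α := by
  have hji : (Sum.inl j : Pt n) ≠ Sum.inl i := by simpa using hij.symm
  have hjj := α.trans (α.symm h) h
  have hii := α.trans h (α.symm h)
  have hk : ∀ z, α.rel z (Sum.inl j) ↔ α.rel z (Sum.inl i) :=
    fun z => ⟨fun h' => α.trans h' (α.symm h), fun h' => α.trans h' h⟩
  apply RP.ext_rel
  intro x y
  rw [tbar_mul _ _ _ (Or.inl ⟨rfl, rfl⟩ : (iso (Sum.inl i) α).rel _ _)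
    (Or.inr ⟨hji, hji, hjj⟩ : (iso (Sum.inl i) α).rel _ _)]
  by_cases hx : x = Sum.inl i
  · subst hx
    by_cases hy : y = Sum.inl i
    · subst hy; simp [iso, hii]
    · simp [iso, hy, hji, hk]
      exact ⟨α.symm, α.symm⟩
  · by_cases hy : y = Sum.inl i
    · subst hy; simp [iso, hx, hji, hk]
    · have h1 : α.rel x (Sum.inl i) → α.rel y (Sum.inl i) → α.rel x y :=
        fun h1 h2 => α.trans h1 (α.symm h2)
      simp only [iso, hx, hy, hk]
      tauto

theorem ebar_idem {n : ℕ} (i : Fin n) : ebar i * ebar i = ebar i := by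
  rw [ebar_mul]
  apply RP.ext_rel
  intro x y
  rcases x with x | x <;> rcases y with y | y <;> simp [iso, ebar, idx] <;> grind

theorem obar_idem {n : ℕ} (i : Fin n) : obar i * obar i = obar i := by
  apply RP.ext_rel
  intro x y
  rw [obar_mul]
  rcases x with x | x <;> rcases y with y | y <;> simp [obar, obarS, idx] <;> grind

theorem tbar_idem {n : ℕ} (i j : Fin n) : tbar i j * tbar i j = tbar i j := by
  apply RP.ext_rel
  intro x y
  rw [tbar_mul _ _ _ (Or.inl rfl : (tbar i j).rel _ _) (Or.inl rfl : (tbar i j).rel _ _)]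
  rcases x with x | x <;> rcases y with y | y <;> simp [tbar, idx] <;> grind

/-! ### The flip anti-automorphism -/

/-- Reflection in the horizontal axis: `i` and `i'` are interchanged. -/
def flip {n : ℕ} (α : RP n) : RP n where
  rel x y := α.rel x.swap y.swap
  symm := α.symm
  trans := α.trans

theorem flip_flip {n : ℕ} (α : RP n) : flip (flip α) = α :=
  RP.ext_rel fun x y => by simp [flip]

/-- The reflection of the product graph. -/
def flip3 {n : ℕ} : V3 n → V3 n := Sum.elim vBot (Sum.elim vMid vTop)

theorem flip3_flip3 {n : ℕ} (v : V3 n) : flip3 (flip3 v) = v := by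
  rcases v with v | v | v <;> rfl

theorem flip3_A {n : ℕ} (x : Pt n) : flip3 (embA x) = embB x.swap := by
  rcases x with v | v <;> rfl

theorem flip3_B {n : ℕ} (x : Pt n) : flip3 (embB x) = embA x.swap := by
  rcases x with v | v <;> rfl

theorem flip3_out {n : ℕ} (x : Pt n) : flip3 (embOut x) = embOut x.swap := by
  rcases x with v | v <;> rfl

theorem pgConn_flip {n : ℕ} {α β : RP n} {v w : V3 n} (h : pgConn α β v w) :
    pgConn (flip β) (flip α) (flip3 v) (flip3 w) := by
  induction h with
  | base h =>
    apply RClosure.base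
    rcases h with ⟨a, b, h, rfl, rfl⟩ | ⟨a, b, h, rfl, rfl⟩
    · exact .inr ⟨a.swap, b.swap, by simpa [flip] using h, flip3_A a, flip3_A b⟩
    · exact .inl ⟨a.swap, b.swap, by simpa [flip] using h, flip3_B a, flip3_B b⟩
  | refl => exact .refl _
  | symm _ ih => exact .symm ih
  | trans _ _ ih1 ih2 => exact .trans ih1 ih2

theorem pgWhite_flip {n : ℕ} {α β : RP n} {v : V3 n} (h : pgWhite α β v) :
    pgWhite (flip β) (flip α) (flip3 v) := by
  rcases h with ⟨j, rfl, h⟩ | ⟨j, rfl, h⟩ | ⟨j, rfl, h⟩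
  · exact .inr (.inr ⟨j, rfl, h⟩)
  · exact .inr (.inl ⟨j, rfl, h.symm⟩)
  · exact .inl ⟨j, rfl, h⟩

theorem flip_mul_aux {n : ℕ} {α β : RP n} {x y : Pt n} (h : (α * β).rel x y) :
    (flip β * flip α).rel x.swap y.swap := by
  rw [mul_rel] at h ⊢
  refine ⟨?_, fun w hw hc => h.2 (flip3 w) ?_ ?_⟩
  · simpa [flip3_out] using pgConn_flip h.1
  · simpa [flip_flip] using pgWhite_flip hw
  · simpa [flip_flip, flip3_out] using pgConn_flip hc

theorem flip_mul {n : ℕ} (α β : RP n) : flip (α * β) = flip β * flip α := by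
  apply RP.ext_rel
  intro x y
  constructor
  · intro h
    simpa using flip_mul_aux h
  · intro h
    have h' := flip_mul_aux h
    rwa [flip_flip, flip_flip] at h'

theorem flip_iso {n : ℕ} (x : Pt n) (α : RP n) : flip (iso x α) = iso x.swap (flip α) := by
  apply RP.ext_rel
  intro y z
  have h : ∀ a b : Pt n, a.swap = b ↔ a = b.swap := by
    rintro (a | a) (b | b) <;> simp
  simp [flip, iso, h]

/-! ### The idempotent generators -/

/-- Indices for the generators: one `ō_i` and one `ē_i` for each `i`, and one `t̄_kj` for each
pair `k < j`. -/
abbrev GIdx (n : ℕ) := Fin n ⊕ Fin n ⊕ (Σ j : Fin n, Fin j.val)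

theorem card_GIdx (n : ℕ) : Nat.card (GIdx n) = (n ^ 2 + 3 * n) / 2 := by
  have h : ∑ j : Fin n, (j : ℕ) = n * (n - 1) / 2 := by
    rw [Fin.sum_univ_eq_sum_range (fun i => i), Finset.sum_range_id]
  simp only [Nat.card_eq_fintype_card, Fintype.card_sum, Fintype.card_sigma, Fintype.card_fin, h]
  rcases n with _ | n
  · rfl
  · have : (n + 1) ^ 2 + 3 * (n + 1) = (n + 1) * n + 2 * (2 * (n + 1)) := by ring
    rw [this, Nat.add_mul_div_left _ _ (by norm_num)]
    simp
    omega

/-- The smaller member `k` of the pair `k < j`. -/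
def small {n : ℕ} (p : Σ j : Fin n, Fin j.val) : Fin n := ⟨p.2.val, p.2.isLt.trans p.1.isLt⟩

theorem small_lt {n : ℕ} (p : Σ j : Fin n, Fin j.val) : small p < p.1 := p.2.isLt

theorem small_inj {n : ℕ} {p q : Σ j : Fin n, Fin j.val} (h : small p = small q)
    (h' : p.1 = q.1) : p = q := by
  obtain ⟨j, k⟩ := p
  obtain ⟨j', k'⟩ := q
  obtain rfl : j = j' := h'
  have : k = k' := Fin.ext (by simpa [small] using h)
  rw [this]

/-- The generators `ō_i`, `ē_i`, `t̄_kj`. -/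
def gen {n : ℕ} : GIdx n → RP n :=
  Sum.elim obar (Sum.elim ebar fun p => tbar (small p) p.1)

/-- The subsemigroup generated by the `ō_i`, `ē_i`, `t̄_kj`. -/
abbrev InT {n : ℕ} (α : RP n) : Prop := SgGen (Set.range (gen (n := n))) α

theorem inT_obar {n : ℕ} (i : Fin n) : InT (obar i) := .incl ⟨.inl i, rfl⟩

theorem inT_ebar {n : ℕ} (i : Fin n) : InT (ebar i) := .incl ⟨.inr (.inl i), rfl⟩

theorem tbar_comm {n : ℕ} (i j : Fin n) : tbar i j = tbar j i :=
  RP.ext_rel fun x y => by simp only [tbar]; tauto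

theorem inT_tbar {n : ℕ} {i j : Fin n} (h : i ≠ j) : InT (tbar i j) := by
  rcases lt_or_gt_of_ne h with h | h
  · exact .incl ⟨.inr (.inr ⟨j, ⟨i.val, h⟩⟩), rfl⟩
  · rw [tbar_comm]
    exact .incl ⟨.inr (.inr ⟨i, ⟨j.val, h⟩⟩), rfl⟩

theorem flip_gen {n : ℕ} (g : GIdx n) : flip (gen g) = gen g := by
  have h : ∀ x : Pt n, idx x.swap = idx x := by rintro (x | x) <;> rfl
  have h' : ∀ a b : Pt n, a.swap = b.swap ↔ a = b := by rintro (a | a) (b | b) <;> simp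
  rcases g with i | i | p <;> apply RP.ext_rel <;> intro x y <;>
    simp [gen, flip, obar, obarS, ebar, tbar, h, h']

theorem inT_flip {n : ℕ} {α : RP n} (h : InT α) : InT (flip α) := by
  induction h with
  | incl h =>
    obtain ⟨g, rfl⟩ := h
    rw [flip_gen]
    exact .incl ⟨g, rfl⟩
  | mul _ _ ih1 ih2 =>
    rw [flip_mul]
    exact .mul ih2 ih1

theorem inT_iso {n : ℕ} {α : RP n} (i : Fin n) (h : InT α) : InT (iso (Sum.inl i) α) := by
  rw [← ebar_mul]
  exact .mul (inT_ebar i) h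

/-- `{x}` is a block of `α`. -/
def Isolated {n : ℕ} (α : RP n) (x : Pt n) : Prop := ∀ y, α.rel x y ↔ x = y

/-- A point that is a rook dot, or that shares its block with a point of the same row, may be
isolated without affecting membership in the subsemigroup. -/
theorem inT_of_iso_up {n : ℕ} {α : RP n} {i : Fin n}
    (hi : ¬ α.rel (Sum.inl i) (Sum.inl i) ∨ ∃ j, j ≠ i ∧ α.rel (Sum.inl i) (Sum.inl j))
    (h : InT (iso (Sum.inl i) α)) : InT α := by
  rcases hi with hi | ⟨j, hj, hi⟩
  · rw [← obar_mul_iso hi]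
    exact .mul (inT_obar i) h
  · rw [← tbar_mul_iso hj.symm hi]
    exact .mul (inT_tbar hj.symm) h

theorem inT_of_iso_dn {n : ℕ} {α : RP n} {i : Fin n}
    (hi : ¬ α.rel (Sum.inr i) (Sum.inr i) ∨ ∃ j, j ≠ i ∧ α.rel (Sum.inr i) (Sum.inr j))
    (h : InT (iso (Sum.inr i) α)) : InT α := by
  rw [← flip_flip α]
  apply inT_flip
  refine inT_of_iso_up (i := i) hi ?_
  have := inT_flip h
  rwa [flip_iso] at this

/-! ### Partial permutations -/

/-- The partial permutation with blocks `{i,(σ i)'}` for `σ i ∉ A`, all other points being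
singleton blocks. -/
def pp {n : ℕ} (σ : Equiv.Perm (Fin n)) (A : Set (Fin n)) : RP n where
  rel x y := x = y ∨ (Sum.elim σ id x = Sum.elim σ id y ∧ Sum.elim σ id x ∉ A)
  symm := by
    rintro x y (rfl | ⟨h1, h2⟩)
    · exact .inl rfl
    · exact .inr ⟨h1.symm, h1 ▸ h2⟩
  trans := by
    rintro x y z (rfl | ⟨h1, h2⟩) h
    · exact h
    · rcases h with rfl | ⟨h3, h4⟩
      · exact .inr ⟨h1, h2⟩
      · exact .inr ⟨h1.trans h3, h2⟩

/-- The partition of the points into the fibres of `g` (upper row) and the identity (lower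
row). -/
def fnRP {n : ℕ} (g : Fin n → Fin n) : RP n where
  rel x y := Sum.elim g id x = Sum.elim g id y
  symm := Eq.symm
  trans := Eq.trans

/-- The hole of a partial permutation can be moved: both elements arise from the partition with
the block `{a, h, b'}`, where `h` is the upper hole and `σ a = b`, by isolating `h` or `a`. -/
theorem inT_pp_swap {n : ℕ} {k b : Fin n} (hb : b ≠ k) {σ : Equiv.Perm (Fin n)}
    (h : InT (pp σ {k})) : InT (pp (Equiv.swap b k * σ) {k}) := by
  set β : RP n := fnRP (Function.update σ (σ.symm k) b) with hβ
  have hne : σ.symm k ≠ σ.symm b := fun h => hb (σ.symm.injective h).symm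
  have hσ : ∀ x, x = σ.symm k ↔ σ x = k := fun x => by rw [Equiv.eq_symm_apply]
  have hσ' : ∀ x, x = σ.symm b ↔ σ x = b := fun x => by rw [Equiv.eq_symm_apply]
  have h1 : iso (Sum.inl (σ.symm k)) β = pp σ {k} := by
    apply RP.ext_rel
    rintro (x | x) (y | y) <;> have := σ.injective.eq_iff (a := x) (b := y) <;>
      simp [iso, pp, hβ, fnRP, Function.update_apply, hσ,
        -EmbeddingLike.apply_eq_iff_eq] <;> grind
  have h2 : iso (Sum.inl (σ.symm b)) β = pp (Equiv.swap b k * σ) {k} := by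
    apply RP.ext_rel
    rintro (x | x) (y | y) <;> have := σ.injective.eq_iff (a := x) (b := y) <;>
      simp [iso, pp, hβ, fnRP, Function.update_apply, hσ, hσ',
        -EmbeddingLike.apply_eq_iff_eq, Equiv.swap_apply_def] <;> grind
  have h3 : β.rel (Sum.inl (σ.symm k)) (Sum.inl (σ.symm b)) := by
    simp [hβ, fnRP, Function.update_apply]
  rw [← h2]
  apply inT_iso
  refine inT_of_iso_up (i := σ.symm k) (.inr ⟨_, hne.symm, h3⟩) ?_
  rwa [h1]

theorem inT_pp_one {n : ℕ} (k : Fin n) (σ : Equiv.Perm (Fin n)) : InT (pp σ {k}) := by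
  induction σ using Equiv.Perm.swap_induction_on with
  | one =>
    have : pp (1 : Equiv.Perm (Fin n)) {k} = ebar k := by
      apply RP.ext_rel
      rintro (x | x) (y | y) <;> simp [pp, ebar, idx]
    rw [this]
    exact inT_ebar k
  | swap_mul f x y hxy ih =>
    by_cases hx : x = k
    · subst hx
      rw [Equiv.swap_comm]
      exact inT_pp_swap hxy.symm ih
    by_cases hy : y = k
    · subst hy
      exact inT_pp_swap hxy ih
    -- `(x y) = (y k)(x y)(y k)` is rewritten through transpositions moving `k`
    have h : Equiv.swap x y = Equiv.swap x k * (Equiv.swap y k * Equiv.swap x k) := by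
      rw [← mul_assoc, Equiv.swap_comm x k,
        Equiv.swap_mul_swap_mul_swap (x := y) (y := k) (z := x) hy hxy.symm]
    rw [h, mul_assoc, mul_assoc]
    exact inT_pp_swap hx (inT_pp_swap hy (inT_pp_swap hx ih))

theorem inT_pp {n : ℕ} (σ : Equiv.Perm (Fin n)) {A : Set (Fin n)} (hA : A.Nonempty) :
    InT (pp σ A) := by
  obtain ⟨k, hk⟩ := hA
  have key : ∀ B : Set (Fin n), B.Finite → InT (pp σ (insert k B)) := by
    intro B hB
    induction B, hB using Set.Finite.induction_on with
    | empty => simpa using inT_pp_one k σ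
    | @insert a B _ _ ih =>
      have : pp σ (insert k (insert a B)) = iso (Sum.inl (σ.symm a)) (pp σ (insert k B)) := by
        have hσ : ∀ x, x = σ.symm a ↔ σ x = a := fun x => by rw [Equiv.eq_symm_apply]
        apply RP.ext_rel
        rintro (x | x) (y | y) <;> have := σ.injective.eq_iff (a := x) (b := y) <;>
          simp [iso, pp, hσ] <;> grind
      rw [this]
      exact inT_iso _ ih
  have := key A A.toFinite
  rwa [Set.insert_eq_of_mem hk] at this

/-! ### Generation of the singular part -/

theorem permRP_ne_of_isolated {n : ℕ} {α : RP n} {x : Pt n} (h : Isolated α x) :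
    ¬ α.IsPermDiag := by
  rintro ⟨σ, rfl⟩
  rcases x with i | i
  · have := (h (Sum.inr (σ i))).1 rfl
    simp at this
  · have := (h (Sum.inl (σ.symm i))).1 (by simp [permRP])
    simp at this

/-- An element without rook dots whose blocks meet each row in at most one point is of the form
`pp σ A`: its transversal blocks give a partial bijection, which extends to a permutation. -/
theorem inT_of_trivial {n : ℕ} {α : RP n} (hα : ¬ α.IsPermDiag)
    (hu : ∀ i j, α.rel (Sum.inl i) (Sum.inl j) ↔ i = j)
    (hd : ∀ i j, α.rel (Sum.inr i) (Sum.inr j) ↔ i = j) : InT α := by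
  classical
  have hex : ∀ i : {i : Fin n // ∃ j, α.rel (Sum.inl i) (Sum.inr j)},
    ∃ j : {j : Fin n // ∃ i, α.rel (Sum.inl i) (Sum.inr j)},
      α.rel (Sum.inl i.1) (Sum.inr j.1) := fun ⟨i, j, h⟩ => ⟨⟨j, i, h⟩, h⟩
  choose f hf using hex
  have hbij : Function.Bijective f := by
    constructor
    · intro a b hab
      have h1 := hf a
      rw [hab] at h1
      exact Subtype.ext ((hu _ _).1 (α.trans h1 (α.symm (hf b))))
    · rintro ⟨j, i, h⟩
      exact ⟨⟨i, j, h⟩, Subtype.ext ((hd _ _).1 (α.trans (α.symm (hf ⟨i, j, h⟩)) h))⟩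
  set σ : Equiv.Perm (Fin n) := (Equiv.ofBijective f hbij).extendSubtype with hσ
  have hσ1 : ∀ i j, α.rel (Sum.inl i) (Sum.inr j) → σ i = j := by
    intro i j h
    have : σ i = (f ⟨i, j, h⟩ : Fin n) :=
      Equiv.extendSubtype_apply_of_mem _ _ ⟨j, h⟩
    rw [this]
    exact (hd _ _).1 (α.trans (α.symm (hf ⟨i, j, h⟩)) h)
  have hud : ∀ i j, α.rel (Sum.inl i) (Sum.inr j) ↔
      σ i = j ∧ ¬ j ∈ {j | ¬ ∃ i, α.rel (Sum.inl i) (Sum.inr j)} := by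
    intro i j
    simp only [Set.mem_ofPred_eq, not_not]
    constructor
    · exact fun h => ⟨hσ1 i j h, i, h⟩
    · rintro ⟨rfl, i', h⟩
      rwa [σ.injective (hσ1 _ _ h)] at h
  have heq : α = pp σ {j | ¬ ∃ i, α.rel (Sum.inl i) (Sum.inr j)} := by
    apply RP.ext_rel
    rintro (x | x) (y | y)
    · rw [hu]; simp [pp]; tauto
    · rw [hud]; simp [pp]; grind
    · rw [show α.rel (Sum.inr x) (Sum.inl y) ↔ α.rel (Sum.inl y) (Sum.inr x) from
        ⟨α.symm, α.symm⟩, hud]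
      simp [pp]; grind
    · rw [hd]; simp [pp]; tauto
  rw [heq]
  apply inT_pp
  by_contra hne
  rw [Set.not_nonempty_iff_eq_empty] at hne
  rw [hne] at heq
  refine hα ⟨σ, heq.trans (RP.ext_rel ?_)⟩
  rintro (x | x) (y | y) <;> simp [pp, permRP]

/-- Induction on the number of points that are not isolated. -/
theorem inT_of_singular {n : ℕ} (α : RP n) (hα : ¬ α.IsPermDiag) : InT α := by
  induction hm : {x | ¬ Isolated α x}.ncard using Nat.strong_induction_on generalizing α with
  | _ m ih =>
  have step : ∀ x, ¬ Isolated α x → InT (iso x α) := by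
    intro x hx
    have hix : Isolated (iso x α) x := fun y => by simp [iso, eq_comm]
    refine ih _ ?_ (iso x α) (permRP_ne_of_isolated hix) rfl
    rw [← hm]
    apply Set.ncard_lt_ncard _ (Set.toFinite _)
    refine (Set.ssubset_iff_of_subset ?_).2 ⟨x, hx, fun h => h hix⟩
    intro y hy hy'
    apply hy
    intro z
    have := hy' z
    by_cases h1 : y = x
    · subst h1; exact hix z
    · have h2 := hy' x
      simp only [iso]
      grind
  by_cases hu : ∃ i, ¬ α.rel (Sum.inl i) (Sum.inl i) ∨ ∃ j, j ≠ i ∧ α.rel (Sum.inl i) (Sum.inl j)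
  · obtain ⟨i, hi⟩ := hu
    refine inT_of_iso_up hi (step _ fun h => ?_)
    rcases hi with hi | ⟨j, hj, hi⟩
    · exact hi ((h _).2 rfl)
    · exact hj (by simpa using ((h _).1 hi).symm)
  by_cases hd : ∃ i, ¬ α.rel (Sum.inr i) (Sum.inr i) ∨ ∃ j, j ≠ i ∧ α.rel (Sum.inr i) (Sum.inr j)
  · obtain ⟨i, hi⟩ := hd
    refine inT_of_iso_dn hi (step _ fun h => ?_)
    rcases hi with hi | ⟨j, hj, hi⟩
    · exact hi ((h _).2 rfl)
    · exact hj (by simpa using ((h _).1 hi).symm)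
  push Not at hu hd
  refine inT_of_trivial hα (fun i j => ⟨fun h => ?_, ?_⟩) (fun i j => ⟨fun h => ?_, ?_⟩)
  · by_contra hne
    exact (hu i).2 j (Ne.symm hne) h
  · rintro rfl; exact (hu i).1
  · by_contra hne
    exact (hd i).2 j (Ne.symm hne) h
  · rintro rfl; exact (hd i).1

/-! ### The lower bound -/

/-- The upper point `i` lies in a transversal block of `α`. -/
def Trans {n : ℕ} (α : RP n) (i : Fin n) : Prop := ∃ k, α.rel (Sum.inl i) (Sum.inr k)

/-- The upper-row relations satisfied by a left factor `β` of `α`. -/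
structure LeftOf {n : ℕ} (β α : RP n) : Prop where
  ker : ∀ i j, β.rel (Sum.inl i) (Sum.inl j) → α.rel (Sum.inl i) (Sum.inl i) →
    α.rel (Sum.inl i) (Sum.inl j)
  dot : ∀ i, α.rel (Sum.inl i) (Sum.inl i) → β.rel (Sum.inl i) (Sum.inl i)
  tr : ∀ i, Trans α i → Trans β i
  block : ∀ i, ¬ Trans β i → ∀ j, (α.rel (Sum.inl i) (Sum.inl j) ↔ β.rel (Sum.inl i) (Sum.inl j))

theorem LeftOf.refl {n : ℕ} (α : RP n) : LeftOf α α :=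
  ⟨fun _ _ h _ => h, fun _ h => h, fun _ h => h, fun _ _ _ => Iff.rfl⟩

theorem LeftOf.trans {n : ℕ} {α β γ : RP n} (h1 : LeftOf α β) (h2 : LeftOf β γ) : LeftOf α γ :=
  ⟨fun i j h h' => h2.ker i j (h1.ker i j h (h2.dot i h')) h',
    fun i h => h1.dot i (h2.dot i h), fun i h => h1.tr i (h2.tr i h),
    fun i h j => (h2.block i (fun h' => h (h1.tr i h')) j).trans (h1.block i h j)⟩

/-- An upper nontransversal block of the left factor is not connected to anything else in the
product graph. -/
theorem conn_of_not_trans {n : ℕ} {β γ : RP n} {i : Fin n} (hi : ¬ Trans β i) {w : V3 n}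
    (h : pgConn β γ (vTop i) w) : w = vTop i ∨ ∃ j, w = vTop j ∧ β.rel (Sum.inl i) (Sum.inl j) := by
  set C : V3 n → Prop := fun w => w = vTop i ∨ ∃ j, w = vTop j ∧ β.rel (Sum.inl i) (Sum.inl j)
    with hC
  have hedge : ∀ v w, pgEdge β γ v w → C v → C w := by
    rintro v w (⟨a, b, h, rfl, rfl⟩ | ⟨a, b, h, rfl, rfl⟩) hv
    · have ha : β.rel (Sum.inl i) b := by
        rcases hv with hv | ⟨j, hv, hj⟩
        · have : a = Sum.inl i := by
            rcases a with a | a <;> simp_all [embA, vTop, vMid]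
          rwa [this] at h
        · have : a = Sum.inl j := by
            rcases a with a | a <;> simp_all [embA, vTop, vMid]
          rw [this] at h
          exact β.trans hj h
      rcases b with b | b
      · exact .inr ⟨b, rfl, ha⟩
      · exact absurd ⟨b, ha⟩ hi
    · exfalso
      rcases a with a | a <;> rcases hv with hv | ⟨j, hv, hj⟩ <;>
        simp [embB, vTop, vMid, vBot] at hv
  have key : ∀ v w, pgConn β γ v w → (C v ↔ C w) := by
    intro v w h
    induction h with
    | base h => exact ⟨hedge _ _ h, hedge _ _ (pgEdge_symm h)⟩
    | refl => exact Iff.rfl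
    | symm _ ih => exact ih.symm
    | trans _ _ ih1 ih2 => exact ih1.trans ih2
  exact (key _ _ h).1 (.inl rfl)

theorem leftOf_mul {n : ℕ} (β γ : RP n) : LeftOf β (β * γ) := by
  have hdot : ∀ i, (β * γ).rel (Sum.inl i) (Sum.inl i) → β.rel (Sum.inl i) (Sum.inl i) := by
    intro i h
    by_contra hn
    exact h.2 (vTop i) (.inl ⟨i, rfl, hn⟩) (.refl _)
  refine ⟨fun i j h h' => ⟨connA h, h'.2⟩, hdot, ?_, ?_⟩
  · rintro i ⟨k, h, -⟩
    by_contra hn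
    rcases conn_of_not_trans hn h with h | ⟨j, h, -⟩ <;> simp [embOut, vBot, vTop] at h
  · intro i hi j
    constructor
    · intro h
      have hii := hdot i ((β * γ).trans h ((β * γ).symm h))
      rcases conn_of_not_trans hi h.1 with h | ⟨k, h, hk⟩
      · have : j = i := by simpa [embOut, vTop] using h
        rwa [this]
      · have : j = k := by simpa [embOut, vTop] using h
        rwa [this]
    · intro h
      refine ⟨connA h, fun w hw hc => ?_⟩
      have hw' : ∃ k, w = vTop k ∧ β.rel (Sum.inl k) (Sum.inl k) := by
        rcases conn_of_not_trans hi hc with hc | ⟨k, hc, hk⟩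
        · exact ⟨i, hc, β.trans h (β.symm h)⟩
        · exact ⟨k, hc, β.trans (β.symm hk) hk⟩
      obtain ⟨k, rfl, hk⟩ := hw'
      rcases hw with ⟨l, hl, h⟩ | ⟨l, hl, h⟩ | ⟨l, hl, h⟩
      · have : k = l := by simpa [vTop] using hl
        exact h (this ▸ hk)
      · simp [vTop, vMid] at hl
      · simp [vTop, vBot] at hl

theorem exists_leftOf {n : ℕ} {G : Set (RP n)} {α : RP n} (h : SgGen G α) :
    ∃ g ∈ G, LeftOf g α := by
  induction h with
  | incl h => exact ⟨_, h, .refl _⟩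
  | mul _ _ ih _ =>
    obtain ⟨g, hg, h⟩ := ih
    exact ⟨g, hg, h.trans (leftOf_mul _ _)⟩

/-- An element with trivial upper kernel all of whose upper points are transversal is a
permutation, by finiteness. -/
theorem isPermDiag_of {n : ℕ} {α : RP n}
    (hk : ∀ i j, α.rel (Sum.inl i) (Sum.inl j) → i = j) (ht : ∀ i, Trans α i) :
    α.IsPermDiag := by
  choose f hf using ht
  have hinj : Function.Injective f := by
    intro a b hab
    have := hf a
    rw [hab] at this
    exact hk _ _ (α.trans this (α.symm (hf b)))
  have hbij := Finite.injective_iff_bijective.1 hinj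
  have hlab : ∀ x, α.rel x (Sum.inr (Sum.elim f id x)) := by
    rintro (i | i)
    · exact hf i
    · obtain ⟨j, rfl⟩ := hbij.2 i
      exact α.trans (α.symm (hf j)) (hf j)
  refine ⟨Equiv.ofBijective f hbij, RP.ext_rel fun x y => ?_⟩
  change α.rel x y ↔ Sum.elim f id x = Sum.elim f id y
  constructor
  · intro h
    have h1 := α.trans (α.symm (hlab x)) (α.trans h (hlab y))
    obtain ⟨a, ha⟩ := hbij.2 (Sum.elim f id x)
    obtain ⟨b, hb⟩ := hbij.2 (Sum.elim f id y)
    rw [← ha, ← hb] at h1 ⊢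
    rw [hk a b (α.trans (hf a) (α.trans h1 (α.symm (hf b))))]
  · intro h
    have h1 := hlab x
    rw [h] at h1
    exact α.trans h1 (α.symm (hlab y))

/-- The shape of the upper row of each generator, which any singular left factor shares:
exactly one rook dot; no rook dot and exactly one nontransversal point; only transversal points
and exactly one pair of points in a common block. -/
def Pat {n : ℕ} (α : RP n) : GIdx n → Prop
  | .inl i => ∀ a, α.rel (Sum.inl a) (Sum.inl a) ↔ a ≠ i
  | .inr (.inl i) => (∀ a, α.rel (Sum.inl a) (Sum.inl a)) ∧ ∀ a, Trans α a ↔ a ≠ i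
  | .inr (.inr p) => (∀ a, α.rel (Sum.inl a) (Sum.inl a)) ∧ (∀ a, Trans α a) ∧
      ∀ a b, a < b → (α.rel (Sum.inl a) (Sum.inl b) ↔ a = small p ∧ b = p.1)

theorem pat_unique {n : ℕ} {α : RP n} {p q : GIdx n} (hp : Pat α p) (hq : Pat α q) : p = q := by
  rcases p with i | i | p <;> rcases q with j | j | q
  · have := (hp j).not.trans (not_not (a := j = i))
    have h2 := (hq j).not.2 (by simp)
    rw [this.1 h2]
  · exact absurd rfl ((hp i).1 (hq.1 i))
  · exact absurd rfl ((hp i).1 (hq.1 i))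
  · exact absurd rfl ((hq j).1 (hp.1 j))
  · by_contra hne
    exact (hq.2 j).1 ((hp.2 j).2 (by rintro rfl; exact hne rfl)) rfl
  · exact absurd rfl ((hp.2 i).1 (hq.2.1 i))
  · exact absurd rfl ((hq j).1 (hp.1 j))
  · exact absurd rfl ((hq.2 j).1 (hp.2.1 j))
  · have h1 := (hp.2.2 _ _ (small_lt q)).1 ((hq.2.2 _ _ (small_lt q)).2 ⟨rfl, rfl⟩)
    rw [small_inj h1.1 h1.2]

theorem pat_of_leftOf {n : ℕ} {g : RP n} {p : GIdx n} (hg : ¬ g.IsPermDiag)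
    (h : LeftOf g (gen p)) : Pat g p := by
  rcases p with i | i | p
  · have hrel : ∀ a b, (obar i).rel (Sum.inl a) (Sum.inl b) ↔ a = b ∧ a ≠ i := fun a b => by
      simp [obar, obarS, idx]
    have htr : ∀ a, a ≠ i → Trans (obar i) a := fun a ha => ⟨a, rfl, ha⟩
    have hdot : ∀ a, a ≠ i → g.rel (Sum.inl a) (Sum.inl a) := fun a ha =>
      h.dot a ((hrel a a).2 ⟨rfl, ha⟩)
    refine fun a => ⟨?_, hdot a⟩
    rintro hgi rfl
    have hti : Trans g a := by
      by_contra hn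
      exact ((hrel a a).1 ((h.block a hn a).2 hgi)).2 rfl
    have hk : ∀ b c, b ≠ a → g.rel (Sum.inl b) (Sum.inl c) → b = c := fun b c hb hbc =>
      ((hrel b c).1 (h.ker b c hbc ((hrel b b).2 ⟨rfl, hb⟩))).1
    refine hg (isPermDiag_of (fun b c hbc => ?_) fun b => ?_)
    · by_cases hb : b = a
      · by_cases hc : c = a
        · rw [hb, hc]
        · exact (hk c b hc (g.symm hbc)).symm
      · exact hk b c hb hbc
    · by_cases hb : b = a
      · exact hb ▸ hti
      · exact h.tr b (htr b hb)
  · have hrel : ∀ a b, (ebar i).rel (Sum.inl a) (Sum.inl b) ↔ a = b := fun a b => by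
      simp [ebar, idx]; tauto
    have htr : ∀ a, a ≠ i → Trans g a := fun a ha => h.tr a ⟨a, .inr ⟨rfl, ha⟩⟩
    refine ⟨fun a => h.dot a ((hrel a a).2 rfl), fun a => ⟨?_, htr a⟩⟩
    rintro hta rfl
    refine hg (isPermDiag_of (fun b c hbc => (hrel b c).1 (h.ker b c hbc ((hrel b b).2 rfl)))
      fun b => ?_)
    by_cases hb : b = a
    · exact hb ▸ hta
    · exact htr b hb
  · have hall : ∀ a, (tbar (small p) p.1).rel (Sum.inl a) (Sum.inl a) := fun a => .inl rfl
    have htr : ∀ a, Trans g a := fun a => h.tr a ⟨a, .inl rfl⟩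
    have hlt : ∀ a b, a < b → g.rel (Sum.inl a) (Sum.inl b) → a = small p ∧ b = p.1 := by
      intro a b hab hr
      have h1 := h.ker a b hr (hall a)
      have h2 := small_lt p
      simp only [gen, Sum.elim_inr, tbar, idx, Sum.elim_inl, id] at h1
      grind
    refine ⟨fun a => h.dot a (hall a), htr, fun a b hab => ⟨hlt a b hab, ?_⟩⟩
    rintro ⟨rfl, rfl⟩
    by_contra hn
    refine hg (isPermDiag_of (fun b c hbc => ?_) htr)
    rcases lt_trichotomy b c with hlt' | rfl | hlt'
    · obtain ⟨rfl, rfl⟩ := hlt b c hlt' hbc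
      exact absurd hbc hn
    · rfl
    · obtain ⟨rfl, rfl⟩ := hlt c b hlt' (g.symm hbc)
      exact absurd (g.symm hbc) hn

theorem gen_singular {n : ℕ} (p : GIdx n) : ¬ (gen p).IsPermDiag := by
  rintro ⟨σ, hσ⟩
  rcases p with i | i | p
  · have : (obar i).rel (Sum.inl i) (Sum.inl i) := by
      rw [show obar i = permRP σ from hσ]; rfl
    exact this.2 rfl
  · have : (ebar i).rel (Sum.inl i) (Sum.inr (σ i)) := by
      rw [show ebar i = permRP σ from hσ]; rfl
    simp [ebar, idx] at this
  · have : (permRP σ).rel (Sum.inl (small p)) (Sum.inl p.1) := by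
      rw [← show tbar (small p) p.1 = permRP σ from hσ]
      exact .inr ⟨.inl rfl, .inr rfl⟩
    exact (small_lt p).ne (σ.injective this)

theorem gen_idem {n : ℕ} (p : GIdx n) : gen p * gen p = gen p := by
  rcases p with i | i | p
  · exact obar_idem i
  · exact ebar_idem i
  · exact tbar_idem _ _

theorem le_ncard_of_generates {n : ℕ} (G : Set (RP n)) (hG : ∀ x ∈ G, ¬ x.IsPermDiag)
    (hgen : ∀ α : RP n, ¬ α.IsPermDiag → SgGen G α) : (n ^ 2 + 3 * n) / 2 ≤ G.ncard := by
  have hex : ∀ p : GIdx n, ∃ g : G, Pat g.1 p := fun p => by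
    obtain ⟨g, hg, h⟩ := exists_leftOf (hgen _ (gen_singular p))
    exact ⟨⟨g, hg⟩, pat_of_leftOf (hG g hg) h⟩
  choose f hf using hex
  have hinj : Function.Injective f := fun p q hpq => by
    have := hf p
    rw [hpq] at this
    exact pat_unique this (hf q)
  rw [← card_GIdx, ← Nat.card_coe_set_eq]
  exact Nat.card_le_card_of_injective f hinj

/-- `rank(RP_n ∖ S_n) = idrank(RP_n ∖ S_n) = (n² + 3n)/2`: every
generating set of the semigroup `RP_n ∖ S_n` has at least `(n² + 3n)/2` elements, and
there is a generating set of exactly this size consisting entirely of idempotents. -/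
theorem stmt12 (n : ℕ) (hn : 1 ≤ n) :
    (∀ G : Set (RP n), (∀ x ∈ G, ¬ x.IsPermDiag) →
      (∀ α : RP n, ¬ α.IsPermDiag → SgGen G α) → (n ^ 2 + 3 * n) / 2 ≤ G.ncard) ∧
    (∃ G : Set (RP n), (∀ x ∈ G, ¬ x.IsPermDiag) ∧ (∀ x ∈ G, x * x = x) ∧
      (∀ α : RP n, ¬ α.IsPermDiag → SgGen G α) ∧ G.ncard = (n ^ 2 + 3 * n) / 2) := by
  refine ⟨le_ncard_of_generates, Set.range gen, ?_, ?_, inT_of_singular, le_antisymm ?_ ?_⟩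
  · rintro _ ⟨p, rfl⟩
    exact gen_singular p
  · rintro _ ⟨p, rfl⟩
    exact gen_idem p
  · rw [← card_GIdx, ← Nat.card_coe_set_eq]
    exact Finite.card_range_le gen
  · refine le_ncard_of_generates _ ?_ inT_of_singular
    rintro _ ⟨p, rfl⟩
    exact gen_singular p

end RookPaper
end

section
/- For all u,v ∈ (E∪T∪O)^+, if u ~ v then uρ ≈ vρ. -/
/-!
Let `M` be the monoid presented by (R18)–(R43). It suffices to check that the images in `M` of the
two sides of each relation (R1)–(R17) agree.

The elements `s_i` are involutions of `M`, and conjugation by `s_k` permutes the `e_i`, the `o_i`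
and the `τ_ij` according to the simple transposition `(k, k+1)` of the indices. For the `τ_ij` this
needs the case analysis of `tau_swap`. It is carried out for an arbitrary family `x_i` in
place of the `q_i` satisfying the same conjugation relations, so that it applies also to `x_i = s_i`;
the corresponding elements are the transpositions `p_ij`. As simple transpositions generate the
symmetric group, every permutation of `[n]` is induced by an endomorphism of `M`
(`exists_hom_of_perm`). By multiple transitivity of the symmetric group, each relation needs to be
verified only for one choice of its indices, such as consecutive ones. For all relations but (R9)
and (R10) this is then immediate from (R18)–(R43).

For (R9) and (R10), the identity `e_i τ_ij e_j = e_i p_ij = p_ij e_j` (`gE_mul_gT_mul_gE_ne`) turns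
both sides into products of transpositions followed by `e_k`, and these products are compared by
means of the braid-type relation `p_ij p_jk = p_ik p_ij` (`gP_mul_gP`).
-/


namespace RookPaper

/-! ## The alphabet E ∪ T ∪ O and the relations (R1)–(R17) -/

/-- The alphabet `E ∪ T ∪ O`: letters `e_i` (`i ∈ [n]`), `t_ij` (`1 ≤ i < j ≤ n`,
with the convention `t_ij = t_ji`), and `o_i` (`i ∈ [n]`). -/
inductive ETO (n : ℕ) : Type
  | e : Fin n → ETO n
  | t : (i j : Fin n) → i < j → ETO n
  | o : Fin n → ETO n

/-- The letter `t_ij = t_ji`, for distinct `i, j`. -/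
def tg {n : ℕ} (i j : Fin n) (h : i ≠ j) : ETO n :=
  if hlt : i < j then ETO.t i j hlt else ETO.t j i (h.symm.lt_of_le (not_lt.mp hlt))

/-- The letter `t_ij` when `i ≠ j`, and the empty word when `i = j`. -/
def tgd {n : ℕ} (i j : Fin n) : List (ETO n) :=
  if h : i = j then [] else [tg i j h]

/-- `x` is a letter of `E ∪ T`. -/
def ETO.isET {n : ℕ} : ETO n → Prop
  | .o _ => False
  | _ => True

/-- `x` is a letter of `O`. -/
def ETO.isO {n : ℕ} : ETO n → Prop
  | .o _ => True
  | _ => False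

/-- The relations (R1)–(R17). -/
inductive RelETO (n : ℕ) : List (ETO n) → List (ETO n) → Prop
  | r1 (i : Fin n) : RelETO n [.e i, .e i] [.e i]
  | r2 (i j : Fin n) (h : i ≠ j) : RelETO n [.e i, .e j] [.e j, .e i]
  | r3 (i j : Fin n) (h : i ≠ j) : RelETO n [tg i j h, tg i j h] [tg i j h]
  | r4 (i j k l : Fin n) (hij : i ≠ j) (hkl : k ≠ l) :
      RelETO n [tg i j hij, tg k l hkl] [tg k l hkl, tg i j hij]
  | r5 (i j k : Fin n) (hij : i ≠ j) (hjk : j ≠ k) (hik : i ≠ k) :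
      RelETO n [tg i j hij, tg j k hjk] [tg j k hjk, tg k i hik.symm]
  | r6 (i j k : Fin n) (hij : i ≠ j) (hki : k ≠ i) (hkj : k ≠ j) :
      RelETO n [tg i j hij, .e k] [.e k, tg i j hij]
  | r7 (i j k : Fin n) (hij : i ≠ j) (hk : k = i ∨ k = j) :
      RelETO n [tg i j hij, .e k, tg i j hij] [tg i j hij]
  | r8 (i j k : Fin n) (hij : i ≠ j) (hk : k = i ∨ k = j) :
      RelETO n [.e k, tg i j hij, .e k] [.e k]
  | r9 (i j k : Fin n) (hij : i ≠ j) (hjk : j ≠ k) (hik : i ≠ k) :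
      RelETO n [.e k, tg k i hik.symm, .e i, tg i j hij, .e j, tg j k hjk, .e k]
               [.e k, tg k j hjk.symm, .e j, tg j i hij.symm, .e i, tg i k hik, .e k]
  | r10 (i j k l : Fin n) (hij : i ≠ j) (hik : i ≠ k) (hil : i ≠ l)
        (hjk : j ≠ k) (hjl : j ≠ l) (hkl : k ≠ l) :
      RelETO n [.e k, tg k i hik.symm, .e i, tg i j hij, .e j, tg j l hjl, .e l,
                  tg l k hkl.symm, .e k]
               [.e k, tg k l hkl, .e l, tg l i hil.symm, .e i, tg i j hij, .e j,
                  tg j k hjk, .e k]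
  | r11 (i : Fin n) : RelETO n [.o i, .o i] [.o i]
  | r12 (i j : Fin n) (h : i ≠ j) : RelETO n [.o i, .o j] [.o j, .o i]
  | r13 (i j : Fin n) (h : i ≠ j) : RelETO n [.o i, .e j] [.e j, .o i]
  | r14 (i : Fin n) : RelETO n [.o i, .e i, .o i] [.o i]
  | r15 (i : Fin n) : RelETO n [.e i, .o i, .e i] [.e i]
  | r16 (i j k : Fin n) (hij : i ≠ j) : RelETO n [tg i j hij, .o k] [.o k, tg i j hij]
  | r17a (i j : Fin n) (h : i ≠ j) : RelETO n [tg i j h, .o i] [.o i, .o j]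
  | r17b (i j : Fin n) (h : i ≠ j) : RelETO n [tg i j h, .o j] [.o i, .o j]

/-- The map `Φ` on letters. -/
def phiLetter {n : ℕ} : ETO n → RP n
  | .e i => ebar i
  | .t i j _ => tbar i j
  | .o i => obar i

/-- The homomorphism `Φ : (E ∪ T ∪ O)⁺ → RP_n`. -/
def PhiETO {n : ℕ} : List (ETO n) → RP n := evalWord phiLetter

/-- For `A = {i₁ < ⋯ < i_k} ⊆ [n]`, the word `o_A = o_{i₁} ⋯ o_{i_k}`. -/
def oWord {n : ℕ} (A : Finset (Fin n)) : List (ETO n) :=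
  (A.sort (· ≤ ·)).map ETO.o

/-- The chain of `t`-letters along consecutive members of a list. -/
def tChain {n : ℕ} : List (Fin n) → List (ETO n)
  | a :: b :: rest => tgd a b ++ tChain (b :: rest)
  | _ => []

/-- For `A = {i₁ < ⋯ < i_k} ⊆ [n]`, the word `t_A = t_{i₁i₂} t_{i₂i₃} ⋯ t_{i_{k-1}i_k}`
(the empty word if `|A| ≤ 1`). -/
def tWord {n : ℕ} (A : Finset (Fin n)) : List (ETO n) :=
  tChain (A.sort (· ≤ ·))

/-- The word `e_ij = e_i t_ij e_j` for distinct `i, j`. -/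
def eWord {n : ℕ} (i j : Fin n) (h : i ≠ j) : List (ETO n) :=
  [ETO.e i, tg i j h, ETO.e j]

/-- `α` lies in (the copy inside `RP_n` of) the symmetric inverse monoid `I_n`:
no rook dots, and every block has at most one upper and at most one lower point. -/
def RP.MemIn {n : ℕ} (α : RP n) : Prop :=
  α.NoDots ∧ (∀ i j : Fin n, α.rel (Sum.inl i) (Sum.inl j) → i = j) ∧
    (∀ i j : Fin n, α.rel (Sum.inr i) (Sum.inr j) → i = j)


/-! ## The alphabet S ∪ E ∪ Q ∪ O and the relations (R18)–(R43) -/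

/-- The alphabet `S ∪ E ∪ Q ∪ O`: letters `s_i, q_i` (`1 ≤ i ≤ n-1`, zero-based) and
`e_i, o_i` (`i ∈ [n]`). -/
inductive SEQO (n : ℕ) : Type
  | s : Fin (n - 1) → SEQO n
  | e : Fin n → SEQO n
  | q : Fin (n - 1) → SEQO n
  | o : Fin n → SEQO n

/-- `x` is a letter of `S`. -/
def SEQO.isS {n : ℕ} : SEQO n → Prop
  | .s _ => True
  | _ => False

/-- The relations (R18)–(R43). -/
inductive RelSEQO (n : ℕ) : List (SEQO n) → List (SEQO n) → Prop
  | r18 (i : Fin (n - 1)) : RelSEQO n [.s i, .s i] []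
  | r19 (i j : Fin (n - 1)) (h : i.val + 1 < j.val ∨ j.val + 1 < i.val) :
      RelSEQO n [.s i, .s j] [.s j, .s i]
  | r20 (i j : Fin (n - 1)) (h : i.val + 1 = j.val ∨ j.val + 1 = i.val) :
      RelSEQO n [.s i, .s j, .s i] [.s j, .s i, .s j]
  | r21 (i : Fin n) : RelSEQO n [.e i, .e i] [.e i]
  | r22 (i j : Fin n) (h : i ≠ j) : RelSEQO n [.e i, .e j] [.e j, .e i]
  | r23 (i : Fin (n - 1)) (j : Fin n) (h : j ≠ lo i ∧ j ≠ hi i) :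
      RelSEQO n [.s i, .e j] [.e j, .s i]
  | r24 (i : Fin (n - 1)) : RelSEQO n [.s i, .e (lo i)] [.e (hi i), .s i]
  | r25 (i : Fin (n - 1)) : RelSEQO n [.e (lo i), .e (hi i), .s i] [.e (lo i), .e (hi i)]
  | r26 (i : Fin (n - 1)) : RelSEQO n [.q i, .q i] [.q i]
  | r27 (i j : Fin (n - 1)) (h : i ≠ j) : RelSEQO n [.q i, .q j] [.q j, .q i]
  | r28 (i j : Fin (n - 1)) (h : i.val + 1 < j.val ∨ j.val + 1 < i.val) :
      RelSEQO n [.s i, .q j] [.q j, .s i]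
  | r29 (i j : Fin (n - 1)) (h : i.val + 1 = j.val ∨ j.val + 1 = i.val) :
      RelSEQO n [.s i, .s j, .q i] [.q j, .s i, .s j]
  | r30a (i : Fin (n - 1)) : RelSEQO n [.q i, .s i] [.q i]
  | r30b (i : Fin (n - 1)) : RelSEQO n [.s i, .q i] [.q i]
  | r31 (i : Fin (n - 1)) (j : Fin n) (h : j ≠ lo i ∧ j ≠ hi i) :
      RelSEQO n [.q i, .e j] [.e j, .q i]
  | r32 (i : Fin (n - 1)) (j : Fin n) (h : j = lo i ∨ j = hi i) :
      RelSEQO n [.q i, .e j, .q i] [.q i]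
  | r33 (i : Fin (n - 1)) (j : Fin n) (h : j = lo i ∨ j = hi i) :
      RelSEQO n [.e j, .q i, .e j] [.e j]
  | r34 (i : Fin n) : RelSEQO n [.o i, .o i] [.o i]
  | r35 (i j : Fin n) (h : i ≠ j) : RelSEQO n [.o i, .o j] [.o j, .o i]
  | r36 (i : Fin (n - 1)) (j : Fin n) (h : j ≠ lo i ∧ j ≠ hi i) :
      RelSEQO n [.s i, .o j] [.o j, .s i]
  | r37 (i : Fin (n - 1)) : RelSEQO n [.s i, .o (lo i)] [.o (hi i), .s i]
  | r38 (i : Fin (n - 1)) : RelSEQO n [.o (lo i), .o (hi i), .s i] [.o (lo i), .o (hi i)]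
  | r39 (i j : Fin n) (h : i ≠ j) : RelSEQO n [.o i, .e j] [.e j, .o i]
  | r40 (i : Fin n) : RelSEQO n [.o i, .e i, .o i] [.o i]
  | r41 (i : Fin n) : RelSEQO n [.e i, .o i, .e i] [.e i]
  | r42 (i : Fin (n - 1)) (j : Fin n) : RelSEQO n [.q i, .o j] [.o j, .q i]
  | r43a (i : Fin (n - 1)) : RelSEQO n [.q i, .o (lo i)] [.o (lo i), .o (hi i)]
  | r43b (i : Fin (n - 1)) : RelSEQO n [.q i, .o (hi i)] [.o (lo i), .o (hi i)]

/-- The map `Ψ` on letters. -/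
def psiLetter {n : ℕ} : SEQO n → RP n
  | .s i => sbar i
  | .e i => ebar i
  | .q i => qbar i
  | .o i => obar i

/-- The homomorphism `Ψ : (S ∪ E ∪ Q ∪ O)* → RP_n`. -/
def PsiW {n : ℕ} : List (SEQO n) → RP n := evalWord psiLetter

/-- The word `σ_ij = s_{i+1} ⋯ s_{j-1}` (for points `i < j`, zero-based: the `s`-letters
with zero-based indices strictly between `i` and `j`, in increasing order). -/
def sigmaW {n : ℕ} (i j : Fin n) : List (SEQO n) :=
  ((List.finRange (n - 1)).filter (fun k => decide (i.val < k.val ∧ k.val < j.val))).map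
    SEQO.s

/-- The word `τ_ij = σ_ij⁻¹ q_i σ_ij`, whose image under `Ψ` is `t̄_ij`. -/
def tauW {n : ℕ} (i j : Fin n) (h : i < j) : List (SEQO n) :=
  (sigmaW i j).reverse ++
    (SEQO.q ⟨i.val, by have hb := j.isLt; have hab : i.val < j.val := h; omega⟩ ::
      sigmaW i j)

/-- The homomorphism `ρ` on letters: `e_i ↦ e_i`, `o_i ↦ o_i`, `t_ij ↦ τ_ij`. -/
def rhoLetter {n : ℕ} : ETO n → List (SEQO n)
  | .e i => [SEQO.e i]
  | .t i j h => tauW i j h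
  | .o i => [SEQO.o i]

/-- The semigroup homomorphism `ρ : (E ∪ T ∪ O)⁺ → (S ∪ E ∪ Q ∪ O)*`. -/
def rho {n : ℕ} (w : List (ETO n)) : List (SEQO n) :=
  w.foldr (fun x acc => rhoLetter x ++ acc) []


/-! ### Conjugation of the elements `τ_ij` by simple transpositions -/

section Tau

variable {M : Type*} [Monoid M]

/-- The conjugate `s_{j-1} ⋯ s_{i+1} x_i s_{i+1} ⋯ s_{j-1}` for `i < j`, by recursion on `j`.
For `j ≤ i` it has the junk value `1`. -/
def tau (s x : ℕ → M) (i : ℕ) : ℕ → M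
  | 0 => 1
  | j + 1 => if i < j then s j * tau s x i j * s j else if i = j then x i else 1

/-- The symmetric version of `tau`, with `tauSym s x i j = tauSym s x j i`. -/
def tauSym (s x : ℕ → M) (i j : ℕ) : M := tau s x (min i j) (max i j)

/-- The relations satisfied by `s_0, …, s_{N-1}` and a family `x_0, …, x_{N-1}` which the simple
transpositions permute by conjugation in the same way as the family `q_i`. -/
structure SimpleConj (N : ℕ) (s x : ℕ → M) : Prop where
  sq : ∀ k < N, s k * s k = 1
  comm : ∀ k l, k < N → l < N → (k + 1 < l ∨ l + 1 < k) → s k * s l = s l * s k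
  braid : ∀ k, k + 1 < N → s k * s (k + 1) * s k = s (k + 1) * s k * s (k + 1)
  comm_x : ∀ k l, k < N → l < N → (k + 1 < l ∨ l + 1 < k) → s k * x l = x l * s k
  self_x : ∀ k < N, s k * x k = x k * s k
  braid_x : ∀ k, k + 1 < N → s k * s (k + 1) * x k = x (k + 1) * s k * s (k + 1)

variable {N : ℕ} {s x : ℕ → M}

theorem tau_self_succ (i : ℕ) : tau s x i (i + 1) = x i := by simp [tau]

theorem tau_succ {i j : ℕ} (h : i < j) : tau s x i (j + 1) = s j * tau s x i j * s j := by
  simp [tau, h]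

theorem semiconjBy_of_involution {a y z : M} (ha : a * a = 1) (h : SemiconjBy a y z) :
    SemiconjBy a z y := by
  have h' : a * y = z * a := h
  calc a * z = a * (z * a) * a := by simp only [mul_assoc, ha, mul_one]
    _ = y * a := by rw [← h', ← mul_assoc, ha, one_mul]

theorem tau_far (H : SimpleConj N s x) {i k : ℕ} (j : ℕ) (hij : i < j) (hj : j ≤ N) (hk : k < N)
    (h : j < k ∨ k + 1 < i) : SemiconjBy (s k) (tau s x i j) (tau s x i j) := by
  induction j with
  | zero => omega
  | succ j ih =>
    by_cases hlt : i < j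
    · have hs : SemiconjBy (s k) (s j) (s j) := H.comm k j hk (by omega) (by omega)
      rw [tau_succ hlt]
      exact (hs.mul_right (ih hlt (by omega) (by omega))).mul_right hs
    · obtain rfl : i = j := by omega
      rw [tau_self_succ]
      exact H.comm_x k i hk (by omega) (by omega)

theorem tau_mid (H : SimpleConj N s x) {i k : ℕ} (j : ℕ) (hj : j ≤ N) (hk : i < k)
    (h : k + 1 < j) : SemiconjBy (s k) (tau s x i j) (tau s x i j) := by
  induction j with
  | zero => omega
  | succ j ih =>
    rw [tau_succ (by omega)]
    by_cases hlt : k + 1 < j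
    · have hs : SemiconjBy (s k) (s j) (s j) := H.comm k j (by omega) (by omega) (by omega)
      exact (hs.mul_right (ih (by omega) hlt)).mul_right hs
    · obtain rfl : j = k + 1 := by omega
      rw [tau_succ hk]
      have hb := H.braid k (by omega)
      have hf : s (k + 1) * tau s x i k = tau s x i k * s (k + 1) :=
        tau_far H k hk (by omega) (by omega) (by omega)
      -- The braid relation moves `s_k` past `s_{k+1} s_k`, turning it into `s_{k+1}`.
      change s k * (s (k + 1) * (s k * tau s x i k * s k) * s (k + 1))
        = s (k + 1) * (s k * tau s x i k * s k) * s (k + 1) * s k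
      calc _ = (s k * s (k + 1) * s k) * tau s x i k * s k * s (k + 1) := by
              simp only [mul_assoc]
        _ = s (k + 1) * s k * (s (k + 1) * tau s x i k) * s k * s (k + 1) := by
              rw [hb]; simp only [mul_assoc]
        _ = s (k + 1) * s k * tau s x i k * (s (k + 1) * s k * s (k + 1)) := by
              rw [hf]; simp only [mul_assoc]
        _ = _ := by rw [← hb]; simp only [mul_assoc]

theorem tau_low (H : SimpleConj N s x) {i : ℕ} (j : ℕ) (hj : j ≤ N) (h : i + 1 < j) :
    SemiconjBy (s i) (tau s x i j) (tau s x (i + 1) j) := by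
  induction j with
  | zero => omega
  | succ j ih =>
    by_cases hlt : i + 1 < j
    · have hs : SemiconjBy (s i) (s j) (s j) := H.comm i j (by omega) (by omega) (by omega)
      rw [tau_succ (by omega), tau_succ hlt]
      exact (hs.mul_right (ih (by omega) hlt)).mul_right hs
    · obtain rfl : j = i + 1 := by omega
      rw [tau_succ (by omega), tau_self_succ, tau_self_succ]
      change s i * (s (i + 1) * x i * s (i + 1)) = x (i + 1) * s i
      rw [← mul_assoc, ← mul_assoc, H.braid_x i (by omega), mul_assoc, H.sq _ (by omega), mul_one]

theorem tau_high (H : SimpleConj N s x) {i j : ℕ} (hj : j < N) (h : i < j) :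
    SemiconjBy (s j) (tau s x i j) (tau s x i (j + 1)) := by
  change s j * tau s x i j = tau s x i (j + 1) * s j
  rw [tau_succ h, mul_assoc _ (s j) (s j), H.sq j hj, mul_one]

/-- Conjugation by `s_k` acts on the indices of `τ_ij` by the transposition `(k, k+1)`. -/
theorem tau_swap (H : SimpleConj N s x) {i j k : ℕ} (hij : i ≠ j) (hi : i ≤ N) (hj : j ≤ N)
    (hk : k < N) : SemiconjBy (s k) (tauSym s x i j)
      (tauSym s x (Equiv.swap k (k + 1) i) (Equiv.swap k (k + 1) j)) := by
  wlog hlt : i < j generalizing i j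
  · have := this hij.symm hj hi (by omega)
    simpa only [tauSym, min_comm, max_comm] using this
  have key : ∀ a b c d : ℕ, a < b → c = Equiv.swap k (k + 1) i → d = Equiv.swap k (k + 1) j →
      (c = a ∧ d = b ∨ c = b ∧ d = a) → SemiconjBy (s k) (tau s x i j) (tau s x a b) →
      SemiconjBy (s k) (tauSym s x i j)
      (tauSym s x (Equiv.swap k (k + 1) i) (Equiv.swap k (k + 1) j)) := by
    rintro a b c d hab rfl rfl h hs
    rcases h with ⟨h1, h2⟩ | ⟨h1, h2⟩
    · simpa only [tauSym, h1, h2, min_eq_left hlt.le, max_eq_right hlt.le, min_eq_left hab.le,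
        max_eq_right hab.le] using hs
    · simpa only [tauSym, h1, h2, min_eq_left hlt.le, max_eq_right hlt.le, min_eq_right hab.le,
        max_eq_left hab.le] using hs
  have sw : ∀ a, Equiv.swap k (k + 1) a = if a = k then k + 1 else if a = k + 1 then k else a :=
    fun a => Equiv.swap_apply_def k (k + 1) a
  rcases lt_trichotomy (k + 1) i with h | h | h
  · exact key i j i j hlt (by grind) (by grind) (by grind) (tau_far H j hlt hj hk (by omega))
  · subst h
    exact key k j k j (by omega) (by grind) (by grind) (by grind)
      (semiconjBy_of_involution (H.sq k hk) (tau_low H j hj hlt))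
  · rcases lt_trichotomy k i with h' | h' | h'
    · omega
    · subst h'
      by_cases hj' : j = k + 1
      · subst hj'
        refine key k (k + 1) (k + 1) k hlt (by grind) (by grind) (by grind) ?_
        rw [tau_self_succ]
        exact H.self_x k hk
      · exact key (k + 1) j (k + 1) j (by omega) (by grind) (by grind) (by grind)
          (tau_low H j hj (by omega))
    · rcases lt_trichotomy k j with hkj | hkj | hkj
      · by_cases hj' : j = k + 1
        · subst hj'
          exact key i k i k h' (by grind) (by grind) (by grind)
            (semiconjBy_of_involution (H.sq k hk) (tau_high H hk h'))
        · exact key i j i j hlt (by grind) (by grind) (by grind)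
            (tau_mid H j hj h' (by omega))
      · subst hkj
        exact key i (k + 1) i (k + 1) (by omega) (by grind) (by grind) (by grind)
          (tau_high H hk hlt)
      · exact key i j i j hlt (by grind) (by grind) (by grind) (tau_far H j hlt hj hk (by omega))

end Tau

/-! ### The monoid presented by (R18)–(R43) -/

/-- The congruence `≈` on the free monoid `(S ∪ E ∪ Q ∪ O)*`. -/
def seqoCon (n : ℕ) : Con (FreeMonoid (SEQO n)) where
  r := CongGen (RelSEQO n)
  iseqv := ⟨CongGen.refl, CongGen.symm, CongGen.trans⟩
  mul' := CongGen.mul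

/-- The monoid presented by (R18)–(R43). -/
abbrev SeqoMon (n : ℕ) := (seqoCon n).Quotient

variable {n : ℕ}

/-- The class of a word in the presented monoid. -/
def cls (w : List (SEQO n)) : SeqoMon n := ((show FreeMonoid (SEQO n) from w) : SeqoMon n)

theorem cls_eq_iff {u v : List (SEQO n)} : cls u = cls v ↔ CongGen (RelSEQO n) u v :=
  (seqoCon n).eq

theorem cls_rel {u v : List (SEQO n)} (h : RelSEQO n u v) : cls u = cls v :=
  cls_eq_iff.2 (.rel h)

theorem cls_append (u v : List (SEQO n)) : cls (u ++ v) = cls u * cls v := rfl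

theorem cls_nil : cls ([] : List (SEQO n)) = 1 := rfl

/-- The class of the letter `e_i`. -/
def gE (i : Fin n) : SeqoMon n := cls [.e i]

/-- The class of the letter `o_i`. -/
def gO (i : Fin n) : SeqoMon n := cls [.o i]

/-- The class of the letter `s_k` with zero-based index `k < n - 1`, and the junk value `1` for
`k` out of range. -/
def gS (n k : ℕ) : SeqoMon n := if h : k < n - 1 then cls [.s ⟨k, h⟩] else 1

/-- The class of the letter `q_k` with zero-based index `k < n - 1`, and the junk value `1` for
`k` out of range. -/
def gQ (n k : ℕ) : SeqoMon n := if h : k < n - 1 then cls [.q ⟨k, h⟩] else 1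

theorem gS_eq {k : ℕ} (h : k < n - 1) : gS n k = cls [.s ⟨k, h⟩] := dif_pos h

theorem gQ_eq {k : ℕ} (h : k < n - 1) : gQ n k = cls [.q ⟨k, h⟩] := dif_pos h

theorem gS_sq {k : ℕ} (h : k < n - 1) : gS n k * gS n k = 1 := by
  rw [gS_eq h]; exact cls_rel (.r18 _)

theorem gS_comm (k l : ℕ) (hk : k < n - 1) (hl : l < n - 1) (h : k + 1 < l ∨ l + 1 < k) :
    gS n k * gS n l = gS n l * gS n k := by
  rw [gS_eq hk, gS_eq hl]; exact cls_rel (.r19 _ _ h)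

theorem gS_braid (k : ℕ) (hk : k + 1 < n - 1) :
    gS n k * gS n (k + 1) * gS n k = gS n (k + 1) * gS n k * gS n (k + 1) := by
  rw [gS_eq hk, gS_eq (show k < n - 1 by omega)]; exact cls_rel (.r20 _ _ (.inl rfl))

theorem simpleConj_q (n : ℕ) : SimpleConj (n - 1) (gS n) (gQ n) where
  sq _ h := gS_sq h
  comm := gS_comm
  braid := gS_braid
  comm_x k l hk hl h := by
    rw [gS_eq hk, gQ_eq hl]; exact cls_rel (.r28 _ _ h)
  self_x k hk := by
    rw [gS_eq hk, gQ_eq hk]; exact (cls_rel (.r30b _)).trans (cls_rel (.r30a _)).symm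
  braid_x k hk := by
    rw [gQ_eq hk, gS_eq hk, gS_eq (show k < n - 1 by omega), gQ_eq (show k < n - 1 by omega)]
    exact cls_rel (.r29 _ _ (.inl rfl))

theorem simpleConj_s (n : ℕ) : SimpleConj (n - 1) (gS n) (gS n) where
  sq _ h := gS_sq h
  comm := gS_comm
  braid := gS_braid
  comm_x := gS_comm
  self_x _ _ := rfl
  braid_x := gS_braid

/-- The class of the word `τ_ij`; see `cls_tauW`. -/
def gT (i j : Fin n) : SeqoMon n := tauSym (gS n) (gQ n) i j

/-- The class of a word in `S` representing the transposition `(i, j)`: the same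
conjugate as `τ_ij`, with `s_i` in place of `q_i`. -/
def gP (i j : Fin n) : SeqoMon n := tauSym (gS n) (gS n) i j

theorem gT_comm (i j : Fin n) : gT i j = gT j i := by
  simp only [gT, tauSym, min_comm, max_comm]

theorem gP_comm (i j : Fin n) : gP i j = gP j i := by
  simp only [gP, tauSym, min_comm, max_comm]

theorem gT_lo_hi (k : Fin (n - 1)) : gT (lo k) (hi k) = cls [.q k] := by
  simp only [gT, tauSym, lo, hi, Nat.le_add_right, min_eq_left, max_eq_right, tau_self_succ,
    gQ_eq k.isLt]

theorem gP_lo_hi (k : Fin (n - 1)) : gP (lo k) (hi k) = cls [.s k] := by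
  simp only [gP, tauSym, lo, hi, Nat.le_add_right, min_eq_left, max_eq_right, tau_self_succ,
    gS_eq k.isLt]

/-! ### The words `τ_ij` represent the elements `gT i j` -/

theorem filter_range_succ (N i j : ℕ) (hij : i < j) (hj : j < N) :
    (List.range N).filter (fun k => decide (i < k ∧ k < j + 1))
      = (List.range N).filter (fun k => decide (i < k ∧ k < j)) ++ [j] := by
  induction N with
  | zero => omega
  | succ N ih =>
    rw [List.range_succ, List.filter_append, List.filter_append]
    by_cases h : j < N
    · rw [ih h]
      have h1 : ¬ (i < N ∧ N < j + 1) := by omega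
      have h2 : ¬ (i < N ∧ N < j) := by omega
      simp only [List.filter_singleton, h1, h2, decide_false, List.append_nil, cond_false]
    · obtain rfl : j = N := by omega
      have h1 : i < j ∧ j < j + 1 := by omega
      have h2 : ¬ (i < j ∧ j < j) := by omega
      rw [List.filter_cons_of_pos (by simpa using h1), List.filter_cons_of_neg (by simp)]
      simp only [List.filter_nil, List.append_nil]
      congr 1
      refine List.filter_congr fun a ha => ?_
      have := List.mem_range.1 ha
      simp only [decide_eq_decide]
      omega

/-- The word `τ_ij` for `j = i + 1 + d` satisfies the recursion on `j` that defines `tau`. -/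
theorem cls_reverse_mul_mul (i d : ℕ) (hd : i + 1 + d < n) (hi' : i < n) :
    cls ((sigmaW (⟨i, hi'⟩ : Fin n) ⟨i + 1 + d, hd⟩).reverse ++
      (SEQO.q ⟨i, by omega⟩ :: sigmaW (⟨i, hi'⟩ : Fin n) ⟨i + 1 + d, hd⟩))
      = tau (gS n) (gQ n) i (i + 1 + d) := by
  induction d with
  | zero =>
    have : sigmaW (⟨i, hi'⟩ : Fin n) ⟨i + 1 + 0, hd⟩ = [] := by
      simp only [sigmaW, List.map_eq_nil_iff, List.filter_eq_nil_iff, decide_eq_true_eq]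
      intros; omega
    rw [this, Nat.add_zero, tau_self_succ, gQ_eq (by omega)]
    rfl
  | succ d ih =>
    have hlast : sigmaW (⟨i, hi'⟩ : Fin n) ⟨i + 1 + (d + 1), hd⟩
        = sigmaW (⟨i, hi'⟩ : Fin n) ⟨i + 1 + d, by omega⟩ ++ [.s ⟨i + 1 + d, by omega⟩] := by
      have hf := filter_range_succ (n - 1) i (i + 1 + d) (by omega) (by omega)
      -- Words in `Fin (n - 1)` are determined by the underlying lists of natural numbers.
      rw [← List.map_coe_finRange_eq_range, List.filter_map, List.filter_map,
        ← List.map_singleton (f := Fin.val) (a := (⟨i + 1 + d, by omega⟩ : Fin (n - 1))),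
        ← List.map_append] at hf
      have := List.map_injective_iff.2 Fin.val_injective hf
      simp only [sigmaW]
      rw [← List.map_singleton (f := SEQO.s), ← List.map_append]
      exact congrArg _ this
    rw [hlast, ← Nat.add_assoc, tau_succ (by omega), ← ih (by omega), gS_eq (by omega)]
    simp only [← cls_append]
    simp

theorem cls_tauW (i j : Fin n) (h : i < j) : cls (tauW i j h) = gT i j := by
  obtain ⟨i, hi'⟩ := i
  obtain ⟨j, hj⟩ := j
  have h' : i < j := h
  obtain ⟨d, rfl⟩ : ∃ d, j = i + 1 + d := ⟨j - (i + 1), by omega⟩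
  have := cls_reverse_mul_mul (n := n) i d hj hi'
  simp only [gT, tauSym, min_eq_left h'.le, max_eq_right h'.le]
  exact this

/-! ### Permutations of the indices are induced by endomorphisms -/

/-- Conjugation by an involution, as an endomorphism. -/
def conjHom {M : Type*} [Monoid M] (a : M) (ha : a * a = 1) : M →* M where
  toFun x := a * x * a
  map_one' := by rw [mul_one, ha]
  map_mul' x y := by
    calc a * (x * y) * a = a * x * 1 * y * a := by simp only [mul_assoc, one_mul]
      _ = _ := by rw [← ha]; simp only [mul_assoc]

theorem conjHom_eq {M : Type*} [Monoid M] {a x y : M} (ha : a * a = 1) (h : SemiconjBy a x y) :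
    conjHom a ha x = y := by
  change a * x * a = y
  rw [h.eq, mul_assoc, ha, mul_one]

/-- An endomorphism of the presented monoid which permutes the indices by `π`. -/
structure Induces (π : Equiv.Perm (Fin n)) (φ : SeqoMon n →* SeqoMon n) : Prop where
  e : ∀ i, φ (gE i) = gE (π i)
  o : ∀ i, φ (gO i) = gO (π i)
  t : ∀ i j, i ≠ j → φ (gT i j) = gT (π i) (π j)
  p : ∀ i j, i ≠ j → φ (gP i j) = gP (π i) (π j)

theorem swap_lo_hi_val (k : Fin (n - 1)) (i : Fin n) :
    (Equiv.swap (lo k) (hi k) i).val = Equiv.swap k.val (k.val + 1) i.val := by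
  have h1 : i = lo k ↔ i.val = k.val := Fin.ext_iff
  have h2 : i = hi k ↔ i.val = k.val + 1 := Fin.ext_iff
  rw [Equiv.swap_apply_def, Equiv.swap_apply_def]
  simp only [h1, h2]
  split_ifs <;> rfl

theorem exists_hom_swap (k : Fin (n - 1)) :
    ∃ φ, Induces (Equiv.swap (lo k) (hi k)) φ := by
  have hk := k.isLt
  refine ⟨conjHom (gS n k) (gS_sq hk), ?_, ?_, ?_, ?_⟩
  · intro i
    apply conjHom_eq
    have h24 : SemiconjBy (gS n k) (gE (lo k)) (gE (hi k)) := by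
      rw [gS_eq hk]; exact cls_rel (.r24 k)
    rcases eq_or_ne i (lo k) with rfl | h1
    · rwa [Equiv.swap_apply_left]
    rcases eq_or_ne i (hi k) with rfl | h2
    · rw [Equiv.swap_apply_right]; exact semiconjBy_of_involution (gS_sq hk) h24
    · rw [Equiv.swap_apply_of_ne_of_ne h1 h2, gS_eq hk]
      exact cls_rel (.r23 k i ⟨h1, h2⟩)
  · intro i
    apply conjHom_eq
    have h37 : SemiconjBy (gS n k) (gO (lo k)) (gO (hi k)) := by
      rw [gS_eq hk]; exact cls_rel (.r37 k)
    rcases eq_or_ne i (lo k) with rfl | h1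
    · rwa [Equiv.swap_apply_left]
    rcases eq_or_ne i (hi k) with rfl | h2
    · rw [Equiv.swap_apply_right]; exact semiconjBy_of_involution (gS_sq hk) h37
    · rw [Equiv.swap_apply_of_ne_of_ne h1 h2, gS_eq hk]
      exact cls_rel (.r36 k i ⟨h1, h2⟩)
  · intro i j hij
    apply conjHom_eq
    have := tau_swap (simpleConj_q n) (i := i) (j := j) (k := k)
      (fun h => hij (Fin.ext h)) (by omega) (by omega) hk
    simpa only [gT, swap_lo_hi_val] using this
  · intro i j hij
    apply conjHom_eq
    have := tau_swap (simpleConj_s n) (i := i) (j := j) (k := k)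
      (fun h => hij (Fin.ext h)) (by omega) (by omega) hk
    simpa only [gP, swap_lo_hi_val] using this

/-- Every permutation of `[n]` is induced by an endomorphism of the presented monoid, since the
simple transpositions generate the symmetric group. -/
theorem exists_hom_of_perm (π : Equiv.Perm (Fin n)) : ∃ φ, Induces π φ := by
  obtain _ | m := n
  · exact ⟨MonoidHom.id _, fun i => i.elim0, fun i => i.elim0, fun i => i.elim0, fun i => i.elim0⟩
  have hπ : π ∈ Submonoid.closure
      (Set.range fun i : Fin m ↦ Equiv.swap i.castSucc i.succ) := by
    rw [Equiv.Perm.mclosure_swap_castSucc_succ]; trivial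
  induction hπ using Submonoid.closure_induction with
  | mem x hx =>
    obtain ⟨k, rfl⟩ := hx
    exact exists_hom_swap (n := m + 1) k
  | one => exact ⟨MonoidHom.id _, fun _ => rfl, fun _ => rfl, fun _ _ _ => rfl, fun _ _ _ => rfl⟩
  | mul x y _ _ hx hy =>
    obtain ⟨φ, hφ⟩ := hx
    obtain ⟨ψ, hψ⟩ := hy
    refine ⟨φ.comp ψ, fun i => ?_, fun i => ?_, fun i j h => ?_, fun i j h => ?_⟩
    · simp [hψ.e, hφ.e]
    · simp [hψ.o, hφ.o]
    · simp [hψ.t _ _ h, hφ.t _ _ (y.injective.ne h)]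
    · simp [hψ.p _ _ h, hφ.p _ _ (y.injective.ne h)]

/-- Any tuple of distinct indices is carried to any other one by a permutation which is induced by
an endomorphism. -/
theorem exists_hom_of_injective {m : ℕ} {b v : Fin m → Fin n} (hb : Function.Injective b)
    (hv : Function.Injective v) :
    ∃ (π : Equiv.Perm (Fin n)) (φ : SeqoMon n →* SeqoMon n),
      Induces π φ ∧ ∀ x, π (b x) = v x := by
  obtain ⟨π, h⟩ := (Equiv.Perm.isMultiplyPretransitive (Fin n) m).exists_smul_eq ⟨b, hb⟩ ⟨v, hv⟩
  obtain ⟨φ, hφ⟩ := exists_hom_of_perm π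
  exact ⟨π, φ, hφ, DFunLike.congr_fun h⟩

theorem le_of_injective {m : ℕ} {v : Fin m → Fin n} (hv : Function.Injective v) : m ≤ n := by
  simpa using Fintype.card_le_of_injective v hv

theorem lo_ne_hi (a : Fin (n - 1)) : lo a ≠ hi a :=
  fun h => by simpa [lo, hi] using congrArg Fin.val h

/-- Two distinct indices are the images of the two points swapped by some `s_a`. -/
theorem exists_hom_two {i j : Fin n} (hij : i ≠ j) :
    ∃ (a : Fin (n - 1)) (π : Equiv.Perm (Fin n)) (φ : SeqoMon n →* SeqoMon n),
      Induces π φ ∧ lo a ≠ hi a ∧ π (lo a) = i ∧ π (hi a) = j := by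
  have hv : Function.Injective ![i, j] := by
    intro x y; fin_cases x <;> fin_cases y <;> simp [hij, hij.symm]
  have hn := le_of_injective hv
  let a : Fin (n - 1) := ⟨0, by omega⟩
  have hb : Function.Injective ![lo a, hi a] := by
    intro x y; fin_cases x <;> fin_cases y <;> simp [lo_ne_hi, (lo_ne_hi a).symm]
  obtain ⟨π, φ, hφ, h⟩ := exists_hom_of_injective hb hv
  exact ⟨a, π, φ, hφ, lo_ne_hi a, h 0, h 1⟩

/-- Three distinct indices are the images of the first three ones. -/
theorem exists_hom_three {i j k : Fin n} (hij : i ≠ j) (hjk : j ≠ k) (hik : i ≠ k) :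
    ∃ (a b : Fin (n - 1)) (π : Equiv.Perm (Fin n)) (φ : SeqoMon n →* SeqoMon n),
      Induces π φ ∧ a.val = 0 ∧ b.val = 1 ∧ π (lo a) = i ∧ π (hi a) = j ∧ π (hi b) = k := by
  have hv : Function.Injective ![i, j, k] := by
    intro x y; fin_cases x <;> fin_cases y <;> simp [hij, hjk, hik, hij.symm, hjk.symm, hik.symm]
  have hn := le_of_injective hv
  let a : Fin (n - 1) := ⟨0, by omega⟩
  let b : Fin (n - 1) := ⟨1, by omega⟩
  have hb : Function.Injective ![lo a, hi a, hi b] := by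
    intro x y; fin_cases x <;> fin_cases y <;> simp [lo, hi, a, b]
  obtain ⟨π, φ, hφ, h⟩ := exists_hom_of_injective hb hv
  exact ⟨a, b, π, φ, hφ, rfl, rfl, h 0, h 1, h 2⟩

/-! ### The relations (R1)–(R17) in the presented monoid -/

theorem gT_mul_self {i j : Fin n} (hij : i ≠ j) : gT i j * gT i j = gT i j := by
  obtain ⟨a, π, φ, H, hlh, rfl, rfl⟩ := exists_hom_two hij
  have base : gT (lo a) (hi a) * gT (lo a) (hi a) = gT (lo a) (hi a) := by
    rw [gT_lo_hi]; exact cls_rel (.r26 a)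
  simpa [H.t _ _ hlh] using congrArg φ base

theorem gT_mul_gE {i j k : Fin n} (hij : i ≠ j) (hki : k ≠ i) (hkj : k ≠ j) :
    gT i j * gE k = gE k * gT i j := by
  obtain ⟨a, π, φ, H, hlh, rfl, rfl⟩ := exists_hom_two hij
  obtain ⟨k, rfl⟩ := π.surjective k
  have base : gT (lo a) (hi a) * gE k = gE k * gT (lo a) (hi a) := by
    rw [gT_lo_hi]
    exact cls_rel (.r31 a k ⟨fun h => hki (h ▸ rfl), fun h => hkj (h ▸ rfl)⟩)
  simpa [H.t _ _ hlh, H.e] using congrArg φ base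

theorem gT_mul_gE_mul_gT {i j k : Fin n} (hij : i ≠ j) (hk : k = i ∨ k = j) :
    gT i j * gE k * gT i j = gT i j := by
  obtain ⟨a, π, φ, H, hlh, rfl, rfl⟩ := exists_hom_two hij
  obtain ⟨k, rfl⟩ := π.surjective k
  have base : gT (lo a) (hi a) * gE k * gT (lo a) (hi a) = gT (lo a) (hi a) := by
    rw [gT_lo_hi]
    exact cls_rel (.r32 a k (by simpa using hk))
  simpa [H.t _ _ hlh, H.e] using congrArg φ base

theorem gE_mul_gT_mul_gE {i j k : Fin n} (hij : i ≠ j) (hk : k = i ∨ k = j) :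
    gE k * gT i j * gE k = gE k := by
  obtain ⟨a, π, φ, H, hlh, rfl, rfl⟩ := exists_hom_two hij
  obtain ⟨k, rfl⟩ := π.surjective k
  have base : gE k * gT (lo a) (hi a) * gE k = gE k := by
    rw [gT_lo_hi]
    exact cls_rel (.r33 a k (by simpa using hk))
  simpa [H.t _ _ hlh, H.e] using congrArg φ base

theorem gT_mul_gO {i j : Fin n} (hij : i ≠ j) (k : Fin n) :
    gT i j * gO k = gO k * gT i j := by
  obtain ⟨a, π, φ, H, hlh, rfl, rfl⟩ := exists_hom_two hij
  obtain ⟨k, rfl⟩ := π.surjective k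
  have base : gT (lo a) (hi a) * gO k = gO k * gT (lo a) (hi a) := by
    rw [gT_lo_hi]
    exact cls_rel (.r42 a k)
  simpa [H.t _ _ hlh, H.o] using congrArg φ base

theorem gT_mul_gO_left {i j : Fin n} (hij : i ≠ j) : gT i j * gO i = gO i * gO j := by
  obtain ⟨a, π, φ, H, hlh, rfl, rfl⟩ := exists_hom_two hij
  have base : gT (lo a) (hi a) * gO (lo a) = gO (lo a) * gO (hi a) := by
    rw [gT_lo_hi]
    exact cls_rel (.r43a a)
  simpa [H.t _ _ hlh, H.o] using congrArg φ base

theorem gT_mul_gO_right {i j : Fin n} (hij : i ≠ j) : gT i j * gO j = gO i * gO j := by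
  obtain ⟨a, π, φ, H, hlh, rfl, rfl⟩ := exists_hom_two hij
  have base : gT (lo a) (hi a) * gO (hi a) = gO (lo a) * gO (hi a) := by
    rw [gT_lo_hi]
    exact cls_rel (.r43b a)
  simpa [H.t _ _ hlh, H.o] using congrArg φ base

theorem gP_mul_self {i j : Fin n} (hij : i ≠ j) : gP i j * gP i j = 1 := by
  obtain ⟨a, π, φ, H, hlh, rfl, rfl⟩ := exists_hom_two hij
  have base : gP (lo a) (hi a) * gP (lo a) (hi a) = 1 := by
    rw [gP_lo_hi]
    exact cls_rel (.r18 a)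
  simpa [H.p _ _ hlh] using congrArg φ base

theorem gP_mul_gE {i j : Fin n} (hij : i ≠ j) : gP i j * gE i = gE j * gP i j := by
  obtain ⟨a, π, φ, H, hlh, rfl, rfl⟩ := exists_hom_two hij
  have base : gP (lo a) (hi a) * gE (lo a) = gE (hi a) * gP (lo a) (hi a) := by
    rw [gP_lo_hi]
    exact cls_rel (.r24 a)
  simpa [H.p _ _ hlh, H.e] using congrArg φ base

/-- For `i ≠ j`, `e_i τ_ij e_j` is the product of `e_i` and the transposition `p_ij`, because
`q p = q` lets a transposition be inserted before `e_j`, and moving it to the right turns `e_j`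
into `e_i`. -/
theorem gE_mul_gT_mul_gE_ne {i j : Fin n} (hij : i ≠ j) :
    gE i * gT i j * gE j = gE i * gP i j := by
  have hTP : gT i j * gP i j = gT i j := by
    obtain ⟨a, π, φ, H, hlh, rfl, rfl⟩ := exists_hom_two hij
    have base : gT (lo a) (hi a) * gP (lo a) (hi a) = gT (lo a) (hi a) := by
      rw [gT_lo_hi, gP_lo_hi]
      exact cls_rel (.r30a a)
    simpa [H.t _ _ hlh, H.p _ _ hlh] using congrArg φ base
  have hPE : gP i j * gE j = gE i * gP i j := by
    rw [gP_comm]; exact gP_mul_gE hij.symm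
  calc gE i * gT i j * gE j = gE i * (gT i j * gP i j) * gE j := by rw [hTP]
    _ = gE i * gT i j * (gP i j * gE j) := by simp only [mul_assoc]
    _ = gE i * gT i j * gE i * gP i j := by rw [hPE]; simp only [mul_assoc]
    _ = gE i * gP i j := by rw [gE_mul_gT_mul_gE hij (.inl rfl)]

theorem gT_mul_gT_comm {i j k : Fin n} (hij : i ≠ j) (hjk : j ≠ k) (hik : i ≠ k) :
    gT i j * gT j k = gT j k * gT i j := by
  obtain ⟨a, b, π, φ, H, ha, hb, rfl, rfl, rfl⟩ := exists_hom_three hij hjk hik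
  have hab : hi a = lo b := Fin.ext (by simp [lo, hi, ha, hb])
  have base : gT (lo a) (hi a) * gT (hi a) (hi b) = gT (hi a) (hi b) * gT (lo a) (hi a) := by
    rw [gT_lo_hi, hab, gT_lo_hi]
    exact cls_rel (.r27 a b (fun h => by rw [h] at ha; omega))
  simpa [H.t _ _ (π.injective.ne_iff.1 hij), H.t _ _ (π.injective.ne_iff.1 hjk)]
    using congrArg φ base

theorem gT_mul_gT_cycle {i j k : Fin n} (hij : i ≠ j) (hjk : j ≠ k) (hik : i ≠ k) :
    gT i j * gT j k = gT j k * gT k i := by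
  rw [gT_comm k i]
  obtain ⟨a, b, π, φ, H, ha, hb, rfl, rfl, rfl⟩ := exists_hom_three hij hjk hik
  have hab : hi a = lo b := Fin.ext (by simp [lo, hi, ha, hb])
  have base : gT (lo a) (hi a) * gT (hi a) (hi b) = gT (hi a) (hi b) * gT (lo a) (hi b) := by
    have h02 : gT (lo a) (hi b) = cls [.s b] * cls [.q a] * cls [.s b] := by
      rw [← gP_lo_hi, ← gT_lo_hi]
      simp [gT, gP, tauSym, lo, hi, ha, hb, tau]
    rw [h02, gT_lo_hi, hab, gT_lo_hi]
    have hqs : cls [.q b] * cls [.s b] = cls [.q b] := cls_rel (.r30a b)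
    have hqq : cls [.q a] * cls [.q b] = cls [.q b] * cls [.q a] :=
      cls_rel (.r27 a b (fun h => by rw [h] at ha; omega))
    rw [← mul_assoc, ← mul_assoc, hqs, ← hqq, mul_assoc, hqs]
  simpa [H.t _ _ (π.injective.ne_iff.1 hij), H.t _ _ (π.injective.ne_iff.1 hjk),
    H.t _ _ (π.injective.ne_iff.1 hik)] using congrArg φ base

theorem gP_mul_gP {i j k : Fin n} (hij : i ≠ j) (hjk : j ≠ k) (hik : i ≠ k) :
    gP i j * gP j k = gP i k * gP i j := by
  obtain ⟨a, b, π, φ, H, ha, hb, rfl, rfl, rfl⟩ := exists_hom_three hij hjk hik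
  have hab : hi a = lo b := Fin.ext (by simp [lo, hi, ha, hb])
  have base : gP (lo a) (hi a) * gP (hi a) (hi b) = gP (lo a) (hi b) * gP (lo a) (hi a) := by
    have h02 : gP (lo a) (hi b) = cls [.s b] * cls [.s a] * cls [.s b] := by
      rw [← gP_lo_hi, ← gP_lo_hi]
      simp [gP, tauSym, lo, hi, ha, hb, tau]
    rw [h02, gP_lo_hi, hab, gP_lo_hi]
    have hbr : cls [.s a] * cls [.s b] * cls [.s a] = cls [.s b] * cls [.s a] * cls [.s b] :=
      cls_rel (.r20 a b (.inl (by omega)))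
    have hsq : cls [.s a] * cls [.s a] = 1 := cls_rel (.r18 a)
    rw [← hbr, mul_assoc _ (cls [.s a]) (cls [.s a]), hsq, mul_one]
  simpa [H.p _ _ (π.injective.ne_iff.1 hij), H.p _ _ (π.injective.ne_iff.1 hjk),
    H.p _ _ (π.injective.ne_iff.1 hik)] using congrArg φ base

theorem gT_commute {i j k l : Fin n} (hij : i ≠ j) (hkl : k ≠ l) :
    gT i j * gT k l = gT k l * gT i j := by
  rcases eq_or_ne i k with rfl | hik
  · rcases eq_or_ne j l with rfl | hjl
    · rfl
    · rw [gT_comm i j]; exact gT_mul_gT_comm hij.symm hkl hjl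
  rcases eq_or_ne i l with rfl | hil
  · rcases eq_or_ne j k with rfl | hjk
    · rw [gT_comm]
    · rw [gT_comm i j, gT_comm k i]; exact gT_mul_gT_comm hij.symm hik hjk
  rcases eq_or_ne j k with rfl | hjk
  · exact gT_mul_gT_comm hij hkl hil
  rcases eq_or_ne j l with rfl | hjl
  · rw [gT_comm k j]; exact gT_mul_gT_comm hij hjk hik
  -- For disjoint pairs the commuting letters are `q_1` and `q_3`.
  have hv : Function.Injective ![i, j, k, l] := by
    intro x y
    fin_cases x <;> fin_cases y <;>
      simp [hij, hkl, hik, hil, hjk, hjl, hij.symm, hkl.symm, hik.symm, hil.symm, hjk.symm,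
        hjl.symm]
  have hn := le_of_injective hv
  let a : Fin (n - 1) := ⟨0, by omega⟩
  let b : Fin (n - 1) := ⟨2, by omega⟩
  have hb : Function.Injective ![lo a, hi a, lo b, hi b] := by
    intro x y; fin_cases x <;> fin_cases y <;> simp [lo, hi, a, b]
  obtain ⟨π, φ, H, h⟩ := exists_hom_of_injective hb hv
  have base : gT (lo a) (hi a) * gT (lo b) (hi b) = gT (lo b) (hi b) * gT (lo a) (hi a) := by
    rw [gT_lo_hi, gT_lo_hi]
    exact cls_rel (.r27 a b (by simp [a, b]))
  have h0 : π (lo a) = i := h 0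
  have h1 : π (hi a) = j := h 1
  have h2 : π (lo b) = k := h 2
  have h3 : π (hi b) = l := h 3
  simpa [H.t _ _ (lo_ne_hi a), H.t _ _ (lo_ne_hi b), h0, h1, h2, h3] using congrArg φ base

/-- Multiplying a word that ends in `e_i` by `τ_ij e_j` amounts to inserting the transposition
`p_ij` and replacing the final `e_i` by `e_j`. -/
theorem mul_gE_mul_gT_mul_gE {i j : Fin n} (hij : i ≠ j) (w : SeqoMon n) :
    w * gE i * gT i j * gE j = w * gP i j * gE j := by
  have hPE : gP i j * gE j = gE i * gP i j := by
    rw [gP_comm]; exact gP_mul_gE hij.symm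
  rw [mul_assoc w, mul_assoc w, gE_mul_gT_mul_gE_ne hij, ← hPE, mul_assoc]

theorem gE_mul_gT_mul_gE' {i j : Fin n} (hij : i ≠ j) :
    gE i * gT i j * gE j = gP i j * gE j := by
  simpa only [one_mul] using mul_gE_mul_gT_mul_gE hij 1

/-- The relation (R9): moving `e_k` to the far right, both sides become `p_ij e_k`. -/
theorem gE_path_three {i j k : Fin n} (hij : i ≠ j) (hjk : j ≠ k) (hik : i ≠ k) :
    gE k * gT k i * gE i * gT i j * gE j * gT j k * gE k
      = gE k * gT k j * gE j * gT j i * gE i * gT i k * gE k := by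
  have h1 : gP k i * gP i j * gP j k = gP i j := by
    rw [mul_assoc, gP_mul_gP hij hjk hik, gP_comm k i, ← mul_assoc, gP_mul_self hik, one_mul]
  have h2 : gP k j * gP j i * gP i k = gP i j := by
    rw [mul_assoc, gP_mul_gP hij.symm hik hjk, gP_comm k j, ← mul_assoc, gP_mul_self hjk, one_mul,
      gP_comm]
  rw [gE_mul_gT_mul_gE' hik.symm, mul_gE_mul_gT_mul_gE hij,
    mul_gE_mul_gT_mul_gE hjk, gE_mul_gT_mul_gE' hjk.symm, mul_gE_mul_gT_mul_gE hij.symm,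
    mul_gE_mul_gT_mul_gE hik]
  simp only [h1, h2]

/-- The relation (R10): moving `e_k` to the far right, both sides become `p_ij p_jl e_k`. -/
theorem gE_path_four {i j k l : Fin n} (hij : i ≠ j) (hik : i ≠ k) (hil : i ≠ l)
    (hjk : j ≠ k) (hjl : j ≠ l) (hkl : k ≠ l) :
    gE k * gT k i * gE i * gT i j * gE j * gT j l * gE l * gT l k * gE k
      = gE k * gT k l * gE l * gT l i * gE i * gT i j * gE j * gT j k * gE k := by
  -- Both products of transpositions equal the 3-cycle `p_ij p_jl`.
  have h1 : gP k i * gP i j * gP j l * gP l k = gP i j * gP j l := by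
    calc gP k i * gP i j * gP j l * gP l k = gP k i * gP i j * (gP j l * gP l k) := by
            simp only [mul_assoc]
      _ = gP k i * (gP i j * gP j k) * gP j l := by
            rw [gP_mul_gP hjl hkl.symm hjk]; simp only [mul_assoc]
      _ = (gP k i * gP i k) * gP i j * gP j l := by
            rw [gP_mul_gP hij hjk hik]; simp only [mul_assoc]
      _ = gP i j * gP j l := by rw [gP_comm k i, gP_mul_self hik, one_mul]
  have h2 : gP k l * gP l i * gP i j * gP j k = gP i j * gP j l := by
    calc gP k l * gP l i * gP i j * gP j k = gP k l * gP l i * (gP i j * gP j k) := by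
            simp only [mul_assoc]
      _ = gP k l * (gP l i * gP i k) * gP i j := by
            rw [gP_mul_gP hij hjk hik]; simp only [mul_assoc]
      _ = (gP k l * gP l k) * gP l i * gP i j := by
            rw [gP_mul_gP hil.symm hik hkl.symm]; simp only [mul_assoc]
      _ = gP i j * gP j l := by
            rw [gP_comm k l, gP_mul_self hkl.symm, one_mul, gP_mul_gP hij hjl hil, gP_comm l i]
  rw [gE_mul_gT_mul_gE' hik.symm, mul_gE_mul_gT_mul_gE hij,
    mul_gE_mul_gT_mul_gE hjl, mul_gE_mul_gT_mul_gE hkl.symm, gE_mul_gT_mul_gE' hkl,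
    mul_gE_mul_gT_mul_gE hil.symm, mul_gE_mul_gT_mul_gE hij, mul_gE_mul_gT_mul_gE hjk]
  simp only [h1, h2]

/-! ### The homomorphism `ρ` respects the relations -/

theorem rho_cons (x : ETO n) (w : List (ETO n)) : rho (x :: w) = rhoLetter x ++ rho w := rfl

theorem rho_append (u v : List (ETO n)) : rho (u ++ v) = rho u ++ rho v := by
  induction u with
  | nil => rfl
  | cons x u ih => rw [List.cons_append, rho_cons, rho_cons, ih, List.append_assoc]

theorem cls_rho_nil : cls (rho ([] : List (ETO n))) = 1 := rfl

theorem cls_rho_e (i : Fin n) (w : List (ETO n)) : cls (rho (.e i :: w)) = gE i * cls (rho w) := rfl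

theorem cls_rho_o (i : Fin n) (w : List (ETO n)) : cls (rho (.o i :: w)) = gO i * cls (rho w) := rfl

theorem cls_rho_tg {i j : Fin n} (h : i ≠ j) (w : List (ETO n)) :
    cls (rho (tg i j h :: w)) = gT i j * cls (rho w) := by
  rw [rho_cons, cls_append]
  congr 1
  unfold tg
  split_ifs with hlt
  · exact cls_tauW i j hlt
  · rw [gT_comm]; exact cls_tauW j i (h.symm.lt_of_le (not_lt.mp hlt))

theorem cls_rho_of_rel {u v : List (ETO n)} (h : RelETO n u v) : cls (rho u) = cls (rho v) := by
  cases h <;> simp only [cls_rho_nil, cls_rho_e, cls_rho_o, cls_rho_tg, mul_one]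
  case r1 i => exact cls_rel (.r21 i)
  case r2 i j h => exact cls_rel (.r22 i j h)
  case r3 h => exact gT_mul_self h
  case r4 hij hkl => exact gT_commute hij hkl
  case r5 hij hjk hik => exact gT_mul_gT_cycle hij hjk hik
  case r6 hij hki hkj => exact gT_mul_gE hij hki hkj
  case r7 hij hk => simpa only [mul_assoc] using gT_mul_gE_mul_gT hij hk
  case r8 hij hk => simpa only [mul_assoc] using gE_mul_gT_mul_gE hij hk
  case r9 hij hjk hik => simpa only [mul_assoc] using gE_path_three hij hjk hik
  case r10 hij hik hil hjk hjl hkl =>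
    simpa only [mul_assoc] using gE_path_four hij hik hil hjk hjl hkl
  case r11 i => exact cls_rel (.r34 i)
  case r12 i j h => exact cls_rel (.r35 i j h)
  case r13 i j h => exact cls_rel (.r39 i j h)
  case r14 i => exact cls_rel (.r40 i)
  case r15 i => exact cls_rel (.r41 i)
  case r16 k hij => exact gT_mul_gO hij k
  case r17a h => exact gT_mul_gO_left h
  case r17b h => exact gT_mul_gO_right h

/-- The map `ρ` respects the congruences on all words, including the empty one. -/
theorem rho_congGen {u v : List (ETO n)} (h : CongGen (RelETO n) u v) :
    CongGen (RelSEQO n) (rho u) (rho v) := by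
  induction h with
  | rel h => exact cls_eq_iff.1 (cls_rho_of_rel h)
  | refl => exact .refl _
  | symm _ ih => exact .symm ih
  | trans _ _ ih₁ ih₂ => exact .trans ih₁ ih₂
  | mul _ _ ih₁ ih₂ => rw [rho_append, rho_append]; exact .mul ih₁ ih₂

/-- for all `u, v ∈ (E ∪ T ∪ O)⁺`, if `u ~ v` then `uρ ≈ vρ`. -/
theorem stmt14 (n : ℕ) (hn : 2 ≤ n) (u v : List (ETO n)) (hu : u ≠ []) (hv : v ≠ [])
    (h : CongGen (RelETO n) u v) :
    CongGen (RelSEQO n) (rho u) (rho v) := by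
  exact rho_congGen h

end RookPaper
end
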